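/- Let S' = K[x_1,…,x_n], S = S'[x], and let I ⊆ S' be a squarefree monomial ideal all of whose squarefree powers are componentwise linear; set J = (I, x) ⊆ S. Then for every k with 2 ≤ k ≤ ν(I), the projective dimension satisfies pd(S/J^[k]) = max{ pd(S'/I^[k]) + 1, pd(S'/I^[k−1]) }, and equivalently depth(S/J^[k]) = min{ depth(S'/I^[k]), depth(S'/I^[k−1]) + 1 }. -/

import Mathlib

open MvPolynomial

/-- The squarefree monomial `∏ i ∈ F, xᵢ`. -/
noncomputable def sqMon (K : Type) [Field K] {σ : Type} (F : Finset σ) :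
    MvPolynomial σ K := ∏ i ∈ F, X i

/-- `I` is a squarefree monomial ideal if it is generated by squarefree monomials. -/
def IsSqfreeMonomialIdeal (K : Type) [Field K] {σ : Type}
    (I : Ideal (MvPolynomial σ K)) : Prop :=
  ∃ 𝒢 : Set (Finset σ), I = Ideal.span ((sqMon K) '' 𝒢)

/-- The `k`-th squarefree power `I^[k]`: the ideal generated by all squarefree
monomials belonging to `I^k`. -/
noncomputable def sqfreePower (K : Type) [Field K] {σ : Type}
    (I : Ideal (MvPolynomial σ K)) (k : ℕ) : Ideal (MvPolynomial σ K) :=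
  Ideal.span {m | ∃ F : Finset σ, m = sqMon K F ∧ m ∈ I ^ k}

/-- The monomial grade `ν(I)`: the largest `k` with `I^[k] ≠ (0)`. -/
noncomputable def monGrade (K : Type) [Field K] {σ : Type}
    (I : Ideal (MvPolynomial σ K)) : ℕ :=
  sSup {k | sqfreePower K I k ≠ ⊥}

/-- The initial degree of a squarefree monomial ideal: the least degree of a
(squarefree) monomial belonging to it. -/
noncomputable def indeg (K : Type) [Field K] {σ : Type}
    (I : Ideal (MvPolynomial σ K)) : ℕ :=
  sInf {d | ∃ F : Finset σ, F.card = d ∧ sqMon K F ∈ I}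

/-- The depth of `S/I` over the polynomial ring `S`: the longest length of a
regular sequence on `S/I` consisting of elements of the irrelevant maximal ideal. -/
noncomputable def polyDepth (K : Type) [Field K] {σ : Type}
    (I : Ideal (MvPolynomial σ K)) : ℕ :=
  sSup {k | ∃ rs : List (MvPolynomial σ K), rs.length = k ∧
    (∀ r ∈ rs, r ∈ Ideal.span (Set.range (X : σ → MvPolynomial σ K))) ∧
    RingTheory.Sequence.IsRegular (MvPolynomial σ K ⧸ I) rs}

/-- The normalized depth function `g_I(k) = depth(S/I^[k]) - (indeg(I^[k]) - 1)`. -/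
noncomputable def nDepth (K : Type) [Field K] {σ : Type}
    (I : Ideal (MvPolynomial σ K)) (k : ℕ) : ℤ :=
  (polyDepth K (sqfreePower K I k) : ℤ) - ((indeg K (sqfreePower K I k) : ℤ) - 1)

open MvPolynomial

/-- The basis indexing set of the `i`-th term of the Koszul complex on the variables:
`i`-element subsets of the variables. -/
abbrev koszulIdx (σ : Type) (i : ℕ) : Type := {T : Finset σ // T.card = i}

/-- The `i`-th term `Λ^i(S^σ) = ⊕_{|T| = i} S·e_T` of the Koszul complex of the
sequence of all variables of `S = K[xᵢ : i ∈ σ]`. -/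
def koszulModule (K : Type) [Field K] (σ : Type) (i : ℕ) : Type :=
  koszulIdx σ i →₀ MvPolynomial σ K

noncomputable instance (K : Type) [Field K] (σ : Type) (i : ℕ) :
    AddCommGroup (koszulModule K σ i) := Finsupp.instAddCommGroup

noncomputable instance (K : Type) [Field K] (σ : Type) (i : ℕ) :
    Module K (koszulModule K σ i) := Finsupp.module _ _

/-- The Koszul differential `e_T ⊗ p ↦ ∑ (-1)^r e_{T∖tᵣ} ⊗ xᵗʳ·p`. -/
noncomputable def koszulDsucc (K : Type) [Field K] (σ : Type) [LinearOrder σ] (i : ℕ) :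
    koszulModule K σ (i + 1) →ₗ[K] koszulModule K σ i :=
  Finsupp.lsum K (fun T => ∑ r : Fin (i + 1),
    ((-1 : K) ^ (r : ℕ)) •
      (((Finsupp.lsingle (⟨T.1.erase ((T.1.orderIsoOfFin T.2 r : T.1) : σ), by
            rw [Finset.card_erase_of_mem (T.1.orderIsoOfFin T.2 r).2, T.2]; omega⟩ :
              koszulIdx σ i)).comp
          (LinearMap.mulLeft K (X ((T.1.orderIsoOfFin T.2 r : T.1) : σ)))) :
            MvPolynomial σ K →ₗ[K] koszulModule K σ i))

/-- The full Koszul differential, with the zero map leaving homological degree `0`. -/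
noncomputable def koszulD (K : Type) [Field K] (σ : Type) [LinearOrder σ] :
    (i : ℕ) → koszulModule K σ i →ₗ[K] koszulModule K σ (i - 1)
  | 0 => 0
  | (i + 1) => koszulDsucc K σ i

/-- The degree-`j` strand of `(Koszul complex) ⊗ J` in homological degree `i`:
elements `∑ e_T ⊗ p_T` with every `p_T ∈ J` homogeneous of degree `j - i`
(and zero if `i > j`, as the generator `e_T` has internal degree `i`). -/
noncomputable def koszulStrand (K : Type) [Field K] {σ : Type}
    (J : Ideal (MvPolynomial σ K)) (i j : ℕ) : Submodule K (koszulModule K σ i) :=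
  ⨅ T : koszulIdx σ i,
    Submodule.comap
      ((Finsupp.lapply T) : koszulModule K σ i →ₗ[K] MvPolynomial σ K)
      ((Submodule.restrictScalars K J ⊓ homogeneousSubmodule σ K (j - i)) ⊓
        (if i ≤ j then ⊤ else ⊥))

/-- The graded Betti number `β_{i,j}(J) = dim_K Tor_i(J, K)_j`, computed as the
dimension of the degree-`j` strand of the `i`-th homology of the Koszul complex
tensored with `J`. -/
noncomputable def gradedBetti (K : Type) [Field K] {σ : Type} [LinearOrder σ]
    (J : Ideal (MvPolynomial σ K)) (i j : ℕ) : ℕ :=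
  Module.finrank K
    (↥(koszulStrand K J i j ⊓ LinearMap.ker (koszulD K σ i)) ⧸
      Submodule.comap (koszulStrand K J i j ⊓ LinearMap.ker (koszulD K σ i)).subtype
        (Submodule.map (koszulD K σ (i + 1)) (koszulStrand K J (i + 1) j)))

/-- An ideal generated in degree `d` has a `d`-linear resolution iff its graded Betti
numbers are concentrated on the line `j = d + i`. -/
def HasLinearResolution (K : Type) [Field K] {σ : Type} [LinearOrder σ]
    (J : Ideal (MvPolynomial σ K)) (d : ℕ) : Prop :=
  ∀ i j : ℕ, gradedBetti K J i j ≠ 0 → j = d + i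

/-- The ideal generated by the degree-`d` component of `J`. -/
noncomputable def degreeComponentIdeal (K : Type) [Field K] {σ : Type}
    (J : Ideal (MvPolynomial σ K)) (d : ℕ) : Ideal (MvPolynomial σ K) :=
  Ideal.span {f | f ∈ J ∧ f.IsHomogeneous d}

/-- `J` is componentwise linear if for every degree `d` the ideal generated by the
degree-`d` component of `J` has a `d`-linear resolution. -/
def ComponentwiseLinear (K : Type) [Field K] {σ : Type} [LinearOrder σ]
    (J : Ideal (MvPolynomial σ K)) : Prop :=
  ∀ d : ℕ, HasLinearResolution K (degreeComponentIdeal K J d) d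

open CategoryTheory

/-- The projective dimension of a module `M` over a commutative ring `S`: the least `d`
such that `Ext^{d+1}(M, -)` vanishes. -/
noncomputable def projDim (S : Type) [CommRing S] (M : Type) [AddCommGroup M] [Module S M] : ℕ :=
  sInf {d : ℕ | ∀ N : ModuleCat S,
    Subsingleton (((Ext S (ModuleCat S) (d + 1)).obj (Opposite.op (ModuleCat.of S M))).obj N)}

section ExtVanishing

variable {R : Type} [CommRing R]

/-- Vanishing of the `i`-th (Yoneda) `Ext` group. -/
def ExtVanishes (N M : ModuleCat.{0} R) (i : ℕ) : Prop :=
  ∀ e : Abelian.Ext N M i, e = 0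

lemma extVanishes_iff_subsingleton {N M : ModuleCat.{0} R} {i : ℕ} :
    ExtVanishes N M i ↔ Subsingleton (Abelian.Ext N M i) :=
  ⟨fun h => ⟨fun a b => (h a).trans (h b).symm⟩, fun _ _ => Subsingleton.elim _ _⟩

lemma ExtVanishes.of_iso {N M M' : ModuleCat.{0} R} {i : ℕ} (f : M ≅ M')
    (h : ExtVanishes N M i) : ExtVanishes N M' i := by
  intro e
  have h1 : (e.comp (Abelian.Ext.mk₀ f.inv) (add_zero i)).comp
      (Abelian.Ext.mk₀ f.hom) (add_zero i) = e := by simp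
  rw [← h1, h (e.comp _ _), Abelian.Ext.zero_comp]

lemma ExtVanishes.of_linearEquiv {N : ModuleCat.{0} R} {M M' : Type} [AddCommGroup M]
    [AddCommGroup M'] [Module R M] [Module R M'] {i : ℕ} (f : M ≃ₗ[R] M')
    (h : ExtVanishes N (ModuleCat.of R M) i) : ExtVanishes N (ModuleCat.of R M') i :=
  h.of_iso f.toModuleIso

lemma extVanishes_of_shortExact_X₂ {S : ShortComplex (ModuleCat.{0} R)} (hS : S.ShortExact)
    {N : ModuleCat.{0} R} {i : ℕ} (h₁ : ExtVanishes N S.X₁ i) (h₃ : ExtVanishes N S.X₃ i) :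
    ExtVanishes N S.X₂ i := by
  intro e
  obtain ⟨x, rfl⟩ := Abelian.Ext.covariant_sequence_exact₂ N hS e (h₃ _)
  rw [h₁ x, Abelian.Ext.zero_comp]

lemma extVanishes_of_shortExact_X₃ {S : ShortComplex (ModuleCat.{0} R)} (hS : S.ShortExact)
    {N : ModuleCat.{0} R} {i : ℕ} (h₁ : ExtVanishes N S.X₁ (i + 1))
    (h₂ : ExtVanishes N S.X₂ i) : ExtVanishes N S.X₃ i := by
  intro e
  obtain ⟨x, rfl⟩ := Abelian.Ext.covariant_sequence_exact₃ N hS e rfl (h₁ _)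
  rw [h₂ x, Abelian.Ext.zero_comp]

lemma extVanishes_of_shortExact_X₁_succ {S : ShortComplex (ModuleCat.{0} R)}
    (hS : S.ShortExact) {N : ModuleCat.{0} R} {i : ℕ} (h₂ : ExtVanishes N S.X₂ (i + 1))
    (h₃ : ExtVanishes N S.X₃ i) : ExtVanishes N S.X₁ (i + 1) := by
  intro e
  obtain ⟨x, rfl⟩ := Abelian.Ext.covariant_sequence_exact₁ N hS e (h₂ _) rfl
  rw [h₃ x, Abelian.Ext.zero_comp]

lemma ext_eq_zero_of_mono {N A B : ModuleCat.{0} R} (f : A ⟶ B) [Mono f]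
    (e : Abelian.Ext N A 0) (h : e.comp (Abelian.Ext.mk₀ f) (add_zero 0) = 0) : e = 0 :=
  Abelian.Ext.postcomp_mk₀_injective_of_mono N f (by simpa using h)

/-- If `φ` is an isomorphism on third terms, factors through a module with vanishing `Ext` on
first terms, and the middle term of the target has vanishing `Ext`, so does its first term. -/
lemma extVanishes_X₁_of_factor {S T : ShortComplex (ModuleCat.{0} R)} (hS : S.ShortExact)
    (hT : T.ShortExact) (φ : S ⟶ T) [IsIso φ.τ₃] {N W : ModuleCat.{0} R} (u : S.X₁ ⟶ W)
    (v : W ⟶ T.X₁) (huv : u ≫ v = φ.τ₁) {i : ℕ} (hW : ExtVanishes N W i)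
    (h₂ : ExtVanishes N T.X₂ i) : ExtVanishes N T.X₁ i := by
  intro e
  cases i with
  | zero =>
    have := hT.mono_f
    exact ext_eq_zero_of_mono T.f e (h₂ _)
  | succ i =>
    obtain ⟨x, rfl⟩ := Abelian.Ext.covariant_sequence_exact₁ N hT e (h₂ _) rfl
    have hx : (x.comp (Abelian.Ext.mk₀ (inv φ.τ₃)) (add_zero i)).comp
        (Abelian.Ext.mk₀ φ.τ₃) (add_zero i) = x := by simp
    rw [← hx, Abelian.Ext.comp_assoc_of_second_deg_zero, ← hS.extClass_naturality hT φ,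
      ← huv, ← Abelian.Ext.mk₀_comp_mk₀, ← Abelian.Ext.comp_assoc_of_third_deg_zero,
      ← Abelian.Ext.comp_assoc_of_third_deg_zero, hW (Abelian.Ext.comp _ _ _),
      Abelian.Ext.zero_comp]

/-- Same as `extVanishes_X₁_of_factor`, for the third term of the target. -/
lemma extVanishes_X₃_of_factor {S T : ShortComplex (ModuleCat.{0} R)} (hS : S.ShortExact)
    (hT : T.ShortExact) (φ : S ⟶ T) [IsIso φ.τ₃] {N W : ModuleCat.{0} R} (u : S.X₁ ⟶ W)
    (v : W ⟶ T.X₁) (huv : u ≫ v = φ.τ₁) {i : ℕ} (hW : ExtVanishes N W (i + 1))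
    (h₂ : ExtVanishes N T.X₂ i) : ExtVanishes N T.X₃ i := by
  intro x
  have hx : (x.comp (Abelian.Ext.mk₀ (inv φ.τ₃)) (add_zero i)).comp
      (Abelian.Ext.mk₀ φ.τ₃) (add_zero i) = x := by simp
  have h0 : x.comp hT.extClass rfl = 0 := by
    rw [← hx, Abelian.Ext.comp_assoc_of_second_deg_zero, ← hS.extClass_naturality hT φ,
      ← huv, ← Abelian.Ext.mk₀_comp_mk₀, ← Abelian.Ext.comp_assoc_of_third_deg_zero,
      ← Abelian.Ext.comp_assoc_of_third_deg_zero, hW (Abelian.Ext.comp _ _ _),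
      Abelian.Ext.zero_comp]
  obtain ⟨y, rfl⟩ := Abelian.Ext.covariant_sequence_exact₃ N hT x rfl h0
  rw [h₂ y, Abelian.Ext.zero_comp]

/-- A scalar killing `N` kills `Ext N M i`. -/
lemma ext_smul_eq_zero {N M : ModuleCat.{0} R} {i : ℕ} {r : R} (hr : ∀ y : N, r • y = 0)
    (e : Abelian.Ext N M i) : r • e = 0 := by
  have h0 : r • 𝟙 N = 0 := by
    ext y
    exact hr y
  have h1 : r • e = (r • Abelian.Ext.mk₀ (𝟙 N)).comp e (zero_add i) := by simp
  rw [h1, ← Abelian.Ext.mk₀_smul, h0]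
  simp

lemma extVanishes_quotSMulTop_iff {N : ModuleCat.{0} R} {M : Type} [AddCommGroup M] [Module R M]
    {r : R} (hr : ∀ y : N, r • y = 0) (hM : IsSMulRegular M r) {i : ℕ} :
    ExtVanishes N (ModuleCat.of R (QuotSMulTop r M)) i ↔
      ExtVanishes N (ModuleCat.of R M) i ∧ ExtVanishes N (ModuleCat.of R M) (i + 1) := by
  have hM' : IsSMulRegular (ModuleCat.of R M) r := hM
  have hS := hM'.smulShortComplex_shortExact
  have hz : ∀ {j : ℕ} (e : Abelian.Ext N (ModuleCat.of R M) j),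
      e.comp (Abelian.Ext.mk₀ ((ModuleCat.of R M).smulShortComplex r).f) (add_zero j) = 0 := by
    intro j e
    exact (Abelian.Ext.smul_eq_comp_mk₀ e r).symm.trans (ext_smul_eq_zero hr e)
  constructor
  · intro h
    constructor
    · intro e
      have : ∃ x, Abelian.Ext.comp x (Abelian.Ext.mk₀
          ((ModuleCat.of R M).smulShortComplex r).f) (add_zero i) = e :=
        Abelian.Ext.covariant_sequence_exact₂ N hS e (h _)
      obtain ⟨x, rfl⟩ := this
      exact hz x
    · intro e
      obtain ⟨x, rfl⟩ := Abelian.Ext.covariant_sequence_exact₁ N hS e (hz e) rfl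
      have hx : x = 0 := h x
      rw [hx, Abelian.Ext.zero_comp]
      rfl
  · rintro ⟨h1, h2⟩
    exact extVanishes_of_shortExact_X₃ hS h2 h1

lemma extVanishes_zero_iff {N : ModuleCat.{0} R} {M : Type} [AddCommGroup M] [Module R M] :
    ExtVanishes N (ModuleCat.of R M) 0 ↔ Subsingleton (N →ₗ[R] M) := by
  rw [extVanishes_iff_subsingleton]
  exact (Abelian.Ext.addEquiv₀.toEquiv.trans ModuleCat.homAddEquiv.toEquiv).subsingleton_congr

lemma extVanishes_zero_of_regular {N : ModuleCat.{0} R} {M : Type} [AddCommGroup M] [Module R M]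
    {r : R} (hr : ∀ y : N, r • y = 0) (hM : IsSMulRegular M r) :
    ExtVanishes N (ModuleCat.of R M) 0 := by
  rw [extVanishes_zero_iff]
  refine ⟨fun f g => LinearMap.ext fun y => hM ?_⟩
  simp only [← map_smul, hr, map_zero]

end ExtVanishing

section ColonSequence

open Pointwise

variable {R : Type} [CommRing R]

/-- Multiplication by `v` as a map `R/C → R/I`. -/
def colonMul (C I : Ideal R) (v : R) (hC : ∀ f, f ∈ C → v * f ∈ I) : R ⧸ C →ₗ[R] R ⧸ I :=
  Submodule.mapQ C I (LinearMap.mulLeft R v) (show C ≤ Submodule.comap _ I from fun f hf => hC f hf)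

lemma colonMul_mk {C I : Ideal R} {v : R} (hC : ∀ f, f ∈ C → v * f ∈ I) (f : R) :
    colonMul C I v hC (Submodule.Quotient.mk f) = Submodule.Quotient.mk (v * f) := rfl

lemma colonMul_injective {C I : Ideal R} {v : R} (hC : ∀ f, f ∈ C ↔ v * f ∈ I) :
    Function.Injective (colonMul C I v fun f => (hC f).1) := by
  rw [← LinearMap.ker_eq_bot, LinearMap.ker_eq_bot']
  intro c hc
  obtain ⟨c, rfl⟩ := Submodule.Quotient.mk_surjective _ c
  rw [colonMul_mk, Submodule.Quotient.mk_eq_zero] at hc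
  rw [Submodule.Quotient.mk_eq_zero]
  exact (hC c).2 hc

lemma factor_colonMul {C I I' : Ideal R} {v : R} (hC : ∀ f, f ∈ C → v * f ∈ I)
    (h : I ≤ I') (hI' : I' = I ⊔ Ideal.span {v}) :
    (Submodule.factor h).comp (colonMul C I v hC) = 0 := by
  refine LinearMap.ext fun f => ?_
  obtain ⟨f, rfl⟩ := Submodule.Quotient.mk_surjective _ f
  change (Submodule.Quotient.mk (v * f) : R ⧸ I') = 0
  rw [Submodule.Quotient.mk_eq_zero, hI']
  exact Ideal.mem_sup_right (Ideal.mul_mem_right _ _ (Ideal.mem_span_singleton_self v))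

lemma colonMul_exact {C I I' : Ideal R} {v : R} (hC : ∀ f, f ∈ C → v * f ∈ I)
    (h : I ≤ I') (hI' : I' = I ⊔ Ideal.span {v}) :
    Function.Exact (colonMul C I v hC) (Submodule.factor h) := by
  intro y
  constructor
  · intro hy
    obtain ⟨y, rfl⟩ := Submodule.Quotient.mk_surjective _ y
    change (Submodule.Quotient.mk y : R ⧸ I') = 0 at hy
    rw [Submodule.Quotient.mk_eq_zero, hI', Submodule.mem_sup] at hy
    obtain ⟨a, ha, b, hb, rfl⟩ := hy
    obtain ⟨c, rfl⟩ := Ideal.mem_span_singleton'.1 hb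
    refine ⟨Submodule.Quotient.mk c, ?_⟩
    rw [colonMul_mk, Submodule.Quotient.eq]
    simpa [mul_comm] using I.neg_mem ha
  · rintro ⟨c, rfl⟩
    exact LinearMap.congr_fun (factor_colonMul hC h hI') c

/-- The sequence `R/C → R/I → R/I'` where the first map is multiplication by `v`. -/
noncomputable def colonComplex (C I I' : Ideal R) (v : R) (hC : ∀ f, f ∈ C → v * f ∈ I)
    (hI' : I' = I ⊔ Ideal.span {v}) : ShortComplex (ModuleCat.{0} R) :=
  ModuleCat.shortComplexOfCompEqZero (colonMul C I v hC)
    (Submodule.factor (hI' ▸ le_sup_left : I ≤ I')) (factor_colonMul hC _ hI')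

lemma colonComplex_shortExact {C I I' : Ideal R} {v : R} (hC : ∀ f, f ∈ C ↔ v * f ∈ I)
    (hI' : I' = I ⊔ Ideal.span {v}) :
    (colonComplex C I I' v (fun f => (hC f).1) hI').ShortExact where
  exact := ModuleCat.shortComplex_exact _
    (colonMul_exact (fun f => (hC f).1) (hI' ▸ le_sup_left) hI')
  mono_f := (ModuleCat.mono_iff_injective _).2 (colonMul_injective hC)
  epi_g := (ModuleCat.epi_iff_surjective _).2 (Submodule.factor_surjective (hI' ▸ le_sup_left))

/-- Functoriality of `colonComplex` in the ideal. -/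
noncomputable def colonComplexMap {C₀ C I₀ I I' : Ideal R} {v : R}
    (hC₀ : ∀ f, f ∈ C₀ → v * f ∈ I₀) (hC : ∀ f, f ∈ C → v * f ∈ I)
    (h₀' : I' = I₀ ⊔ Ideal.span {v}) (hI' : I' = I ⊔ Ideal.span {v}) (hI : I₀ ≤ I)
    (hCC : C₀ ≤ C) :
    colonComplex C₀ I₀ I' v hC₀ h₀' ⟶ colonComplex C I I' v hC hI' where
  τ₁ := ModuleCat.ofHom (Submodule.factor hCC)
  τ₂ := ModuleCat.ofHom (Submodule.factor hI)
  τ₃ := 𝟙 _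
  comm₁₂ := by
    ext x
    obtain ⟨x, rfl⟩ := Submodule.Quotient.mk_surjective _ x
    rfl
  comm₂₃ := by
    ext x
    obtain ⟨x, rfl⟩ := Submodule.Quotient.mk_surjective _ x
    rfl

lemma extVanishes_colon {N : ModuleCat.{0} R} {C₀ C I₀ I : Ideal R} {v : R}
    (hC₀ : ∀ f, f ∈ C₀ ↔ v * f ∈ I₀) (hC : ∀ f, f ∈ C ↔ v * f ∈ I) (hI : I₀ ≤ I)
    (hv : I ⊔ Ideal.span {v} = I₀ ⊔ Ideal.span {v}) (h₀ : C₀ ≤ I) {i : ℕ}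
    (h : ExtVanishes N (ModuleCat.of R (R ⧸ I)) i) : ExtVanishes N (ModuleCat.of R (R ⧸ C)) i := by
  have hIC : I ≤ C := fun f hf => (hC f).2 (I.mul_mem_left v hf)
  have : IsIso (colonComplexMap (fun f => (hC₀ f).1) (fun f => (hC f).1) hv rfl hI
    (h₀.trans hIC)).τ₃ := inferInstanceAs (IsIso (𝟙 _))
  refine extVanishes_X₁_of_factor (colonComplex_shortExact hC₀ hv) (colonComplex_shortExact hC rfl)
    (colonComplexMap (fun f => (hC₀ f).1) (fun f => (hC f).1) hv rfl hI (h₀.trans hIC))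
    (W := ModuleCat.of R (R ⧸ I)) (ModuleCat.ofHom (Submodule.factor h₀))
    (ModuleCat.ofHom (Submodule.factor hIC)) ?_ h h
  ext x
  obtain ⟨x, rfl⟩ := Submodule.Quotient.mk_surjective _ x
  rfl

lemma extVanishes_sup_of_colon {N : ModuleCat.{0} R} {C₀ C B I₀ I : Ideal R} {v : R}
    (hC₀ : ∀ f, f ∈ C₀ ↔ v * f ∈ I₀) (hC : ∀ f, f ∈ C ↔ v * f ∈ I) (hI : I₀ ≤ I)
    (hv : I ⊔ Ideal.span {v} = I₀ ⊔ Ideal.span {v}) (h₀ : C₀ ≤ B) (hB : B ≤ C) {i : ℕ}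
    (h₁ : ExtVanishes N (ModuleCat.of R (R ⧸ B)) (i + 1))
    (h : ExtVanishes N (ModuleCat.of R (R ⧸ I)) i) :
    ExtVanishes N (ModuleCat.of R (R ⧸ (I ⊔ Ideal.span {v}))) i := by
  have : IsIso (colonComplexMap (fun f => (hC₀ f).1) (fun f => (hC f).1) hv rfl hI
    (h₀.trans hB)).τ₃ := inferInstanceAs (IsIso (𝟙 _))
  refine extVanishes_X₃_of_factor (colonComplex_shortExact hC₀ hv) (colonComplex_shortExact hC rfl)
    (colonComplexMap (fun f => (hC₀ f).1) (fun f => (hC f).1) hv rfl hI (h₀.trans hB))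
    (W := ModuleCat.of R (R ⧸ B)) (ModuleCat.ofHom (Submodule.factor h₀))
    (ModuleCat.ofHom (Submodule.factor hB)) ?_ h₁ h
  ext x
  obtain ⟨x, rfl⟩ := Submodule.Quotient.mk_surjective _ x
  rfl

/-- If `v` is a nonzerodivisor modulo `I` killing `N`, the vanishing of `Ext` for `R/(I,v)`. -/
lemma extVanishes_sup_span_iff {N : ModuleCat.{0} R} {I : Ideal R} {v : R}
    (hN : ∀ y : N, v • y = 0) (hv : ∀ f, v * f ∈ I → f ∈ I) {i : ℕ} :
    ExtVanishes N (ModuleCat.of R (R ⧸ (I ⊔ Ideal.span {v}))) i ↔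
      ExtVanishes N (ModuleCat.of R (R ⧸ I)) i ∧
        ExtVanishes N (ModuleCat.of R (R ⧸ I)) (i + 1) := by
  have hreg : IsSMulRegular (R ⧸ I) v := by
    rw [isSMulRegular_iff_right_eq_zero_of_smul]
    intro f hf
    obtain ⟨f, rfl⟩ := Submodule.Quotient.mk_surjective _ f
    rw [← Submodule.Quotient.mk_smul, Submodule.Quotient.mk_eq_zero] at hf
    exact (Submodule.Quotient.mk_eq_zero _).2 (hv f hf)
  have hmap : v • (⊤ : Submodule R (R ⧸ I)) = Submodule.map I.mkQ (Ideal.span {v}) := by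
    ext y
    rw [Submodule.mem_smul_pointwise_iff_exists]
    constructor
    · rintro ⟨f, -, rfl⟩
      obtain ⟨f, rfl⟩ := Submodule.Quotient.mk_surjective _ f
      exact ⟨v * f, Ideal.mul_mem_right _ _ (Ideal.mem_span_singleton_self v), rfl⟩
    · rintro ⟨f, hf, rfl⟩
      obtain ⟨c, rfl⟩ := Ideal.mem_span_singleton'.1 hf
      refine ⟨Submodule.Quotient.mk c, trivial, ?_⟩
      rw [← Submodule.Quotient.mk_smul, smul_eq_mul, mul_comm]
      rfl
  have e : QuotSMulTop v (R ⧸ I) ≃ₗ[R] R ⧸ (I ⊔ Ideal.span {v}) :=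
    (Submodule.quotEquivOfEq _ _ hmap).trans
      (Submodule.quotientQuotientEquivQuotientSup I (Ideal.span {v}))
  rw [← extVanishes_quotSMulTop_iff hN hreg]
  exact ⟨fun h => h.of_linearEquiv e.symm, fun h => h.of_linearEquiv e⟩

end ColonSequence

section ExtDepth

variable {R : Type} [CommRing R]

/-- The first index of a nonvanishing `Ext^d(N, M)`. -/
def IsExtDepth (N M : ModuleCat.{0} R) (d : ℕ) : Prop :=
  (∀ i < d, ExtVanishes N M i) ∧ ¬ ExtVanishes N M d

lemma IsExtDepth.forall_lt_iff {N M : ModuleCat.{0} R} {d k : ℕ} (h : IsExtDepth N M d) :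
    (∀ i < k, ExtVanishes N M i) ↔ k ≤ d := by
  refine ⟨fun hk => ?_, fun hk i hi => h.1 i (hi.trans_le hk)⟩
  by_contra hlt
  exact h.2 (hk d (by omega))

lemma smul_top_lt_top_of_le {m I : Ideal R} (hI : I ≤ m) (hm : m ≠ ⊤) :
    m • (⊤ : Submodule R (R ⧸ I)) < ⊤ := by
  rw [lt_top_iff_ne_top]
  intro h
  have h1 : (Submodule.Quotient.mk 1 : R ⧸ I) ∈ m • (⊤ : Submodule R (R ⧸ I)) :=
    by rw [h]; exact Submodule.mem_top
  have h2 : m • (⊤ : Submodule R (R ⧸ I)) ≤ Submodule.map I.mkQ m := by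
    refine Submodule.smul_le.2 fun r hr y _ => ?_
    obtain ⟨y, rfl⟩ := Submodule.Quotient.mk_surjective _ y
    exact ⟨r * y, Ideal.mul_mem_right _ _ hr, rfl⟩
  obtain ⟨z, hz, hz1⟩ := h2 h1
  rw [Submodule.mkQ_apply, Submodule.Quotient.eq] at hz1
  refine hm ((Ideal.eq_top_iff_one _).2 ?_)
  have := m.sub_mem hz (hI hz1)
  simpa using this

lemma support_quotient_eq (m : Ideal R) :
    Module.support R (ModuleCat.of R (R ⧸ m)) = PrimeSpectrum.zeroLocus m := by
  have : Module.support R (R ⧸ m) = PrimeSpectrum.zeroLocus m := by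
    rw [Module.support_eq_zeroLocus, Ideal.annihilator_quotient]
  exact this

lemma exists_regular_sequence_iff [IsNoetherianRing R] {m I : Ideal R} (hI : I ≤ m) (hm : m ≠ ⊤)
    (k : ℕ) :
    (∃ rs : List R, rs.length = k ∧ (∀ r ∈ rs, r ∈ m) ∧
      RingTheory.Sequence.IsRegular (R ⧸ I) rs) ↔
      ∀ i < k, ExtVanishes (ModuleCat.of R (R ⧸ m)) (ModuleCat.of R (R ⧸ I)) i := by
  have hfin : Module.Finite R (ModuleCat.of R (R ⧸ I)) := inferInstanceAs (Module.Finite R (R ⧸ I))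
  have hfin' : Module.Finite R (ModuleCat.of R (R ⧸ m)) :=
    inferInstanceAs (Module.Finite R (R ⧸ m))
  simp only [extVanishes_iff_subsingleton]
  constructor
  · rintro ⟨rs, rfl, hrs, hreg⟩
    exact ModuleCat.subsingleton_ext_of_exists_isRegular m _ (support_quotient_eq m).subset
      (ModuleCat.of R (R ⧸ I)) (smul_top_lt_top_of_le hI hm) rs hrs hreg
  · exact ModuleCat.exists_isRegular_of_exists_subsingleton_ext m k (ModuleCat.of R (R ⧸ I))
      (smul_top_lt_top_of_le hI hm) _ (support_quotient_eq m)

lemma exists_isExtDepth [IsNoetherianRing R] {m : Ideal R} (hm : m ≠ ⊤) :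
    ∀ I : Ideal R, I ≤ m → ∃ d, IsExtDepth (ModuleCat.of R (R ⧸ m)) (ModuleCat.of R (R ⧸ I)) d := by
  intro I
  induction I using WellFoundedGT.induction with
  | ind I ih =>
    intro hI
    by_contra! hcon
    have hall : ∀ i, ExtVanishes (ModuleCat.of R (R ⧸ m)) (ModuleCat.of R (R ⧸ I)) i := by
      intro i
      induction i using Nat.strong_induction_on with
      | _ i hi =>
        by_contra h
        exact hcon i ⟨hi, h⟩
    obtain ⟨rs, hlen, hmem, hreg⟩ := (exists_regular_sequence_iff hI hm 1).2 fun i _ => hall i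
    obtain ⟨r, rfl⟩ := List.length_eq_one_iff.1 hlen
    have hr : r ∈ m := hmem r (by simp)
    have hr1 := ((RingTheory.Sequence.isRegular_cons_iff _ _ _).1 hreg).1
    have hrI : ∀ f, r * f ∈ I → f ∈ I := by
      intro f hf
      rw [isSMulRegular_iff_right_eq_zero_of_smul] at hr1
      have := hr1 (Submodule.Quotient.mk f) (by
        rw [← Submodule.Quotient.mk_smul, Submodule.Quotient.mk_eq_zero]; exact hf)
      exact (Submodule.Quotient.mk_eq_zero _).1 this
    have hlt : I < I ⊔ Ideal.span {r} := by
      refine lt_of_le_of_ne le_sup_left fun h => hm ?_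
      have hrmem : r * 1 ∈ I := by
        rw [mul_one, h]
        exact Ideal.mem_sup_right (Ideal.mem_span_singleton_self r)
      exact (Ideal.eq_top_iff_one _).2 (hI (hrI 1 hrmem))
    obtain ⟨d, -, hd⟩ := ih _ hlt
      (sup_le hI ((Ideal.span_singleton_le_iff_mem _).2 hr))
    refine hd ((extVanishes_sup_span_iff ?_ hrI).2 ⟨hall d, hall (d + 1)⟩)
    intro y
    obtain ⟨y, rfl⟩ := Submodule.Quotient.mk_surjective _ y
    exact (Submodule.Quotient.mk_eq_zero _).2 (Ideal.mul_mem_right _ _ hr)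

end ExtDepth

section SquarefreeIdeals

variable (K : Type) [Field K] {σ : Type}

/-- The squarefree monomial ideal spanned by the squarefree monomials in `U`. -/
noncomputable def sqIdeal (U : Set (Finset σ)) : Ideal (MvPolynomial σ K) :=
  Ideal.span (sqMon K '' U)

lemma sqMon_eq_monomial (F : Finset σ) :
    sqMon K F = monomial (∑ i ∈ F, Finsupp.single i 1) 1 := by
  exact (monomial_sum_one F fun i => Finsupp.single i 1).symm

lemma sum_single_one_apply [DecidableEq σ] (F : Finset σ) (j : σ) :
    (∑ i ∈ F, Finsupp.single i 1 : σ →₀ ℕ) j = if j ∈ F then 1 else 0 := by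
  rw [Finsupp.finsetSum_apply]
  simp [Finsupp.single_apply]

lemma sum_single_one_le_iff (F : Finset σ) (s : σ →₀ ℕ) :
    (∑ i ∈ F, Finsupp.single i 1 : σ →₀ ℕ) ≤ s ↔ F ⊆ s.support := by
  classical
  rw [Finsupp.le_def]
  simp only [sum_single_one_apply]
  constructor
  · intro h i hi
    have := h i
    rw [if_pos hi] at this
    exact Finsupp.mem_support_iff.2 (by omega)
  · intro h i
    split_ifs with hi
    · exact Nat.one_le_iff_ne_zero.2 (Finsupp.mem_support_iff.1 (h hi))
    · exact Nat.zero_le _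

lemma support_sum_single_one (F : Finset σ) :
    (∑ i ∈ F, Finsupp.single i 1 : σ →₀ ℕ).support = F := by
  classical
  ext j
  simp [Finsupp.mem_support_iff, sum_single_one_apply]

variable {K}

lemma mem_sqIdeal_iff_exists {U : Set (Finset σ)} {f : MvPolynomial σ K} :
    f ∈ sqIdeal K U ↔ ∀ s ∈ f.support, ∃ F ∈ U, F ⊆ s.support := by
  have h : sqMon K '' U = (fun s => monomial s (1 : K)) ''
      ((fun F : Finset σ => (∑ i ∈ F, Finsupp.single i 1 : σ →₀ ℕ)) '' U) := by
    rw [Set.image_image]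
    exact Set.image_congr fun F _ => sqMon_eq_monomial K F
  rw [sqIdeal, h, mem_ideal_span_monomial_image]
  simp only [Set.exists_mem_image, sum_single_one_le_iff]

lemma mem_sqIdeal {U : Set (Finset σ)} (hU : IsUpperSet U) {f : MvPolynomial σ K} :
    f ∈ sqIdeal K U ↔ ∀ s ∈ f.support, s.support ∈ U := by
  rw [mem_sqIdeal_iff_exists]
  exact ⟨fun h s hs => let ⟨_, hF, hFs⟩ := h s hs; hU hFs hF,
    fun h s hs => ⟨_, h s hs, subset_rfl⟩⟩

lemma sqMon_mem_sqIdeal {U : Set (Finset σ)} (hU : IsUpperSet U) {F : Finset σ} :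
    sqMon K F ∈ sqIdeal K U ↔ F ∈ U := by
  classical
  rw [mem_sqIdeal hU, sqMon_eq_monomial, support_monomial, if_neg one_ne_zero]
  simp [support_sum_single_one]

lemma sqIdeal_mono {U V : Set (Finset σ)} (h : U ⊆ V) : sqIdeal K U ≤ sqIdeal K V :=
  Ideal.span_mono (Set.image_mono h)

variable [DecidableEq σ]

lemma sqIdeal_colon {U : Set (Finset σ)} (hU : IsUpperSet U) (v : σ) (f : MvPolynomial σ K) :
    f ∈ sqIdeal K {G | insert v G ∈ U} ↔ X v * f ∈ sqIdeal K U := by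
  have hU' : IsUpperSet {G | insert v G ∈ U} :=
    fun G H hGH hG => hU (Finset.insert_subset_insert v hGH) hG
  have key : ∀ s : σ →₀ ℕ, (Finsupp.single v 1 + s).support = insert v s.support := by
    intro s
    ext j
    by_cases h : v = j
    · subst h; simp
    · simp [Ne.symm h]
  rw [mem_sqIdeal hU', mem_sqIdeal hU, support_X_mul]
  simp [key]

omit [DecidableEq σ] in
lemma sqIdeal_sup_span_X (U : Set (Finset σ)) (v : σ) :
    sqIdeal K U ⊔ Ideal.span {X v} = sqIdeal K {G | v ∈ G ∨ G ∈ U} := by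
  apply le_antisymm
  · refine sup_le (sqIdeal_mono fun G hG => Or.inr hG) ?_
    rw [Ideal.span_singleton_le_iff_mem]
    exact Ideal.subset_span ⟨{v}, Or.inl (Finset.mem_singleton_self v), by simp [sqMon]⟩
  · refine Ideal.span_le.2 ?_
    rintro _ ⟨G, hG | hG, rfl⟩
    · refine Ideal.mem_sup_right (Ideal.mem_span_singleton.2 ?_)
      exact Finset.dvd_prod_of_mem (fun i => (X i : MvPolynomial σ K)) hG
    · exact Ideal.mem_sup_left (Ideal.subset_span ⟨G, hG, rfl⟩)

lemma sqIdeal_sup_span_X_erase (U : Set (Finset σ)) (v : σ) :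
    sqIdeal K U ⊔ Ideal.span {X v} = sqIdeal K {G | G.erase v ∈ U} ⊔ Ideal.span {X v} := by
  rw [sqIdeal_sup_span_X, sqIdeal_sup_span_X]
  congr 1
  ext G
  by_cases h : v ∈ G
  · simp [h]
  · simp [h]

lemma isUpperSet_insert {U : Set (Finset σ)} (hU : IsUpperSet U) (v : σ) :
    IsUpperSet {G | insert v G ∈ U} :=
  fun _ _ hGH hG => hU (Finset.insert_subset_insert v hGH) hG

lemma isUpperSet_erase {U : Set (Finset σ)} (hU : IsUpperSet U) (v : σ) :
    IsUpperSet {G : Finset σ | G.erase v ∈ U} :=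
  fun _ _ hGH hG => hU (Finset.erase_subset_erase v hGH) hG

lemma sqIdeal_erase_colon {U : Set (Finset σ)} (hU : IsUpperSet U) (v : σ)
    (f : MvPolynomial σ K) :
    f ∈ sqIdeal K {G | G.erase v ∈ U} ↔ X v * f ∈ sqIdeal K {G | G.erase v ∈ U} := by
  rw [← sqIdeal_colon (isUpperSet_erase hU v)]
  simp

lemma sqIdeal_erase_le {U : Set (Finset σ)} (hU : IsUpperSet U) (v : σ) :
    sqIdeal K {G | G.erase v ∈ U} ≤ sqIdeal K U :=
  sqIdeal_mono fun G hG => hU (Finset.erase_subset v G) hG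

variable (K) in
/-- Vanishing of `Ext^i(K, S/I)` for the squarefree monomial ideal `I` with monomials in `U`. -/
def SqExtVanishes (U : Set (Finset σ)) (i : ℕ) : Prop :=
  ExtVanishes
    (ModuleCat.of (MvPolynomial σ K)
      (MvPolynomial σ K ⧸ Ideal.span (Set.range (X : σ → MvPolynomial σ K))))
    (ModuleCat.of (MvPolynomial σ K) (MvPolynomial σ K ⧸ sqIdeal K U)) i

omit [DecidableEq σ] in
lemma smul_residue_eq_zero {r : MvPolynomial σ K}
    (hr : r ∈ Ideal.span (Set.range (X : σ → MvPolynomial σ K)))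
    (y : ModuleCat.of (MvPolynomial σ K)
      (MvPolynomial σ K ⧸ Ideal.span (Set.range (X : σ → MvPolynomial σ K)))) : r • y = 0 := by
  obtain ⟨y, rfl⟩ := Submodule.Quotient.mk_surjective _ y
  exact (Submodule.Quotient.mk_eq_zero _).2 (Ideal.mul_mem_right _ _ hr)

lemma SqExtVanishes.colon {U : Set (Finset σ)} (hU : IsUpperSet U) (v : σ) {i : ℕ}
    (h : SqExtVanishes K U i) : SqExtVanishes K {G | insert v G ∈ U} i :=
  extVanishes_colon (sqIdeal_erase_colon hU v) (sqIdeal_colon hU v) (sqIdeal_erase_le hU v)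
    (sqIdeal_sup_span_X_erase U v) (sqIdeal_erase_le hU v) h

lemma SqExtVanishes.sup {U B : Set (Finset σ)} (hU : IsUpperSet U) (v : σ) {i : ℕ}
    (h₁ : ∀ G, G.erase v ∈ U → G ∈ B) (h₂ : ∀ G, G ∈ B → insert v G ∈ U)
    (hB : SqExtVanishes K B (i + 1)) (h : SqExtVanishes K U i) :
    SqExtVanishes K {G | v ∈ G ∨ G ∈ U} i := by
  unfold SqExtVanishes
  rw [← sqIdeal_sup_span_X]
  exact extVanishes_sup_of_colon (sqIdeal_erase_colon hU v) (sqIdeal_colon hU v)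
    (sqIdeal_erase_le hU v) (sqIdeal_sup_span_X_erase U v) (sqIdeal_mono h₁) (sqIdeal_mono h₂)
    hB h

lemma SqExtVanishes.of_colon_of_sup {U : Set (Finset σ)} (hU : IsUpperSet U) (v : σ) {i : ℕ}
    (h₁ : SqExtVanishes K {G | insert v G ∈ U} i)
    (h₂ : SqExtVanishes K {G | v ∈ G ∨ G ∈ U} i) : SqExtVanishes K U i := by
  unfold SqExtVanishes at h₂
  rw [← sqIdeal_sup_span_X] at h₂
  exact extVanishes_of_shortExact_X₂ (colonComplex_shortExact (sqIdeal_colon hU v) rfl) h₁ h₂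

lemma sqExtVanishes_addVar_iff {U : Set (Finset σ)} (hU : IsUpperSet U) (v : σ)
    (hv : ∀ G, insert v G ∈ U → G ∈ U) {i : ℕ} :
    SqExtVanishes K {G | v ∈ G ∨ G ∈ U} i ↔ SqExtVanishes K U i ∧ SqExtVanishes K U (i + 1) := by
  have h : ∀ f : MvPolynomial σ K, X v * f ∈ sqIdeal K U → f ∈ sqIdeal K U := by
    intro f hf
    rw [← sqIdeal_colon hU] at hf
    exact sqIdeal_mono hv hf
  unfold SqExtVanishes
  rw [← sqIdeal_sup_span_X]
  exact extVanishes_sup_span_iff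
    (smul_residue_eq_zero (Ideal.subset_span (Set.mem_range_self v))) h

/-- The squarefree monomials `G` lying in `A` if `x ∤ G`, and in `B` if `x ∣ G`. -/
def mixSet (x : σ) (A B : Set (Finset σ)) : Set (Finset σ) :=
  {G | x ∉ G ∧ G ∈ A ∨ x ∈ G ∧ G ∈ B}

lemma isUpperSet_mixSet {x : σ} {A B : Set (Finset σ)} (hA : IsUpperSet A) (hB : IsUpperSet B)
    (hAB : A ⊆ B) : IsUpperSet (mixSet x A B) := by
  rintro G H hGH (⟨-, hG⟩ | ⟨hx, hG⟩)
  · by_cases hx : x ∈ H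
    · exact Or.inr ⟨hx, hB hGH (hAB hG)⟩
    · exact Or.inl ⟨hx, hA hGH hG⟩
  · exact Or.inr ⟨hGH hx, hB hGH hG⟩

lemma subset_of_forall_insert (x : σ) {A B : Set (Finset σ)} (hA : IsUpperSet A)
    (hAB : ∀ v G, insert v G ∈ A → G ∈ B) : A ⊆ B :=
  fun G hG => hAB x G (hA (Finset.subset_insert x G) hG)

lemma addVar_mixSet (x : σ) (A B : Set (Finset σ)) :
    {G | x ∈ G ∨ G ∈ mixSet x A B} = {G | x ∈ G ∨ G ∈ A} := by
  ext G
  by_cases h : x ∈ G <;> simp [mixSet, h]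

lemma SqExtVanishes.addVar_of_mixSet [Finite σ] (x : σ) {i : ℕ} (A : Set (Finset σ)) :
    ∀ B : Set (Finset σ), IsUpperSet A → IsUpperSet B → (∀ G, insert x G ∈ A → G ∈ A) →
      (∀ G, insert x G ∈ B → G ∈ B) → A.Nonempty → ∅ ∉ B →
      (∀ v G, insert v G ∈ A → G ∈ B) → SqExtVanishes K (mixSet x A B) i →
      SqExtVanishes K {G | x ∈ G ∨ G ∈ A} i := by
  induction A using WellFoundedGT.induction with
  | ind A ih =>
    intro B hA hB hAx hBx hne hB0 hAB hJ
    have hsub := subset_of_forall_insert x hA hAB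
    have hJu := isUpperSet_mixSet (x := x) hA hB hsub
    obtain ⟨F, hFA, hFmin⟩ := exists_minimal_le_of_wellFoundedLT (· ∈ A) _ hne.some_mem |>.imp
      fun F h => h.2
    have hxF : x ∉ F := fun h => by
      have h1 : F.erase x ∈ A := hAx _ (by rwa [Finset.insert_erase h])
      exact Finset.notMem_erase x F (hFmin h1 (Finset.erase_subset x F) h)
    obtain ⟨v, hv⟩ : F.Nonempty := by
      rw [Finset.nonempty_iff_ne_empty]
      rintro rfl
      exact hB0 (hsub hFA)
    have hvx : x ≠ v := fun h => hxF (h ▸ hv)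
    have hlt : A < {G | insert v G ∈ A} := by
      refine lt_of_le_of_ne (fun G hG => hA (Finset.subset_insert v G) hG) fun h => ?_
      have h1 : F.erase v ∈ A := by
        rw [h]
        change insert v (F.erase v) ∈ A
        rwa [Finset.insert_erase hv]
      exact Finset.notMem_erase v F (hFmin h1 (Finset.erase_subset v F) hv)
    by_cases hW : SqExtVanishes K {G | insert v G ∈ A} (i + 1)
    · have := SqExtVanishes.sup hJu x (B := {G | insert v G ∈ A}) ?_ ?_ hW hJ
      · rwa [addVar_mixSet] at this
      · rintro G (⟨-, hG⟩ | ⟨hG, -⟩)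
        · exact hA ((Finset.erase_subset x G).trans (Finset.subset_insert v G)) hG
        · exact absurd hG (Finset.notMem_erase x G)
      · intro G hG
        exact Or.inr ⟨Finset.mem_insert_self x G, hB (Finset.subset_insert x G) (hAB v G hG)⟩
    · exfalso
      have hx' : ∀ G, insert x G ∈ {G | insert v G ∈ A} → G ∈ {G | insert v G ∈ A} := by
        intro G hG
        refine hAx _ ?_
        rw [Finset.insert_comm]
        exact hG
      have hAv := isUpperSet_insert hA v
      suffices h : SqExtVanishes K {G | x ∈ G ∨ G ∈ {G | insert v G ∈ A}} i from
        hW ((sqExtVanishes_addVar_iff hAv x hx').1 h).2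
      have hJv := hJ.colon hJu v
      have hmix : {G | insert v G ∈ mixSet x A B} =
          mixSet x {G | insert v G ∈ A} {G | insert v G ∈ B} := by
        ext G
        simp [mixSet, hvx]
      rw [hmix] at hJv
      by_cases h0 : ∅ ∈ {G | insert v G ∈ B}
      · have huniv : mixSet x {G | insert v G ∈ A} {G | insert v G ∈ B} =
            {G | x ∈ G ∨ G ∈ {G | insert v G ∈ A}} := by
          ext G
          have hG : insert v G ∈ B := isUpperSet_insert hB v (Finset.empty_subset G) h0
          by_cases hx : x ∈ G <;> simp [mixSet, hx, hG]
        rwa [huniv] at hJv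
      · refine ih _ hlt _ hAv (isUpperSet_insert hB v) hx' ?_ (hne.mono hlt.le) h0 ?_ hJv
        · intro G hG
          refine hBx _ ?_
          rw [Finset.insert_comm]
          exact hG
        · intro w G hG
          refine hAB w _ ?_
          rw [Finset.insert_comm]
          exact hG

lemma sqExtVanishes_mixSet_iff [Finite σ] (x : σ) {A B : Set (Finset σ)} (hA : IsUpperSet A)
    (hB : IsUpperSet B) (hAx : ∀ G, insert x G ∈ A → G ∈ A) (hBx : ∀ G, insert x G ∈ B → G ∈ B)
    (hne : A.Nonempty) (hB0 : ∅ ∉ B) (hAB : ∀ v G, insert v G ∈ A → G ∈ B) {i : ℕ} :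
    SqExtVanishes K (mixSet x A B) i ↔
      SqExtVanishes K {G | x ∈ G ∨ G ∈ A} i ∧ SqExtVanishes K B i := by
  have hJu := isUpperSet_mixSet (x := x) hA hB (subset_of_forall_insert x hA hAB)
  have hcol : {G | insert x G ∈ mixSet x A B} = B := by
    ext G
    simp only [mixSet, Set.mem_ofPred_eq, Finset.mem_insert_self, not_true_eq_false, false_and,
      true_and, false_or]
    exact ⟨hBx G, fun h => hB (Finset.subset_insert x G) h⟩
  constructor
  · intro h
    refine ⟨h.addVar_of_mixSet x A B hA hB hAx hBx hne hB0 hAB, ?_⟩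
    have := h.colon hJu x
    rwa [hcol] at this
  · rintro ⟨h₁, h₂⟩
    refine SqExtVanishes.of_colon_of_sup hJu x ?_ ?_
    · rwa [hcol]
    · rwa [addVar_mixSet]

end SquarefreeIdeals

section PolyDepth

variable {K : Type} [Field K] {σ : Type}

lemma mem_span_range_X {p : MvPolynomial σ K} :
    p ∈ Ideal.span (Set.range (X : σ → MvPolynomial σ K)) ↔ constantCoeff p = 0 := by
  classical
  rw [← Set.image_univ, mem_ideal_span_X_image]
  simp only [Set.mem_univ, true_and]
  constructor
  · intro h
    rw [constantCoeff_eq]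
    by_contra h0
    obtain ⟨i, hi⟩ := h 0 (mem_support_iff.2 h0)
    simp at hi
  · intro h s hs
    by_contra! hcon
    have : s = 0 := Finsupp.ext hcon
    subst this
    exact mem_support_iff.1 hs h

lemma span_range_X_ne_top :
    Ideal.span (Set.range (X : σ → MvPolynomial σ K)) ≠ ⊤ := by
  rw [Ne, Ideal.eq_top_iff_one, mem_span_range_X]
  simp

lemma sqIdeal_le_span_range_X {U : Set (Finset σ)} (h0 : ∅ ∉ U) :
    sqIdeal K U ≤ Ideal.span (Set.range (X : σ → MvPolynomial σ K)) := by
  refine Ideal.span_le.2 ?_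
  rintro _ ⟨F, hF, rfl⟩
  obtain ⟨i, hi⟩ : F.Nonempty := by
    rw [Finset.nonempty_iff_ne_empty]
    rintro rfl
    exact h0 hF
  rw [SetLike.mem_coe, mem_span_range_X, sqMon, map_prod]
  exact Finset.prod_eq_zero hi (by simp)

lemma forall_lt_sqExtVanishes_iff [Finite σ] {U : Set (Finset σ)} (h0 : ∅ ∉ U) {k : ℕ} :
    (∀ i < k, SqExtVanishes K U i) ↔ k ≤ polyDepth K (sqIdeal K U) := by
  have hm := span_range_X_ne_top (K := K) (σ := σ)
  have hI := sqIdeal_le_span_range_X (K := K) h0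
  obtain ⟨d, hd⟩ := exists_isExtDepth hm _ hI
  have hset : {k | ∃ rs : List (MvPolynomial σ K), rs.length = k ∧
      (∀ r ∈ rs, r ∈ Ideal.span (Set.range (X : σ → MvPolynomial σ K))) ∧
      RingTheory.Sequence.IsRegular (MvPolynomial σ K ⧸ sqIdeal K U) rs} = Set.Iic d := by
    ext k
    exact (exists_regular_sequence_iff hI hm k).trans hd.forall_lt_iff
  rw [polyDepth, hset, csSup_Iic]
  exact hd.forall_lt_iff

lemma polyDepth_comap {τ : Type} (φ : MvPolynomial τ K →+* MvPolynomial σ K)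
    (ψ : MvPolynomial σ K →+* MvPolynomial τ K) (hφψ : ∀ f, φ (ψ f) = f)
    (hφ : ∀ f, constantCoeff (φ f) = constantCoeff f)
    (I : Ideal (MvPolynomial σ K)) : polyDepth K (I.comap φ) = polyDepth K I := by
  let e : (MvPolynomial τ K ⧸ I.comap φ) ≃+* (MvPolynomial σ K ⧸ I) :=
    RingEquiv.ofBijective (Ideal.quotientMap I φ le_rfl)
      ⟨Ideal.quotientMap_injective, Ideal.quotientMap_surjective fun f => ⟨ψ f, hφψ f⟩⟩
  have he : ∀ r y, e.toAddEquiv (r • y) = φ r • e.toAddEquiv y := by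
    intro r y
    obtain ⟨y, rfl⟩ := Ideal.Quotient.mk_surjective y
    exact congrArg (Ideal.Quotient.mk I) (map_mul φ r y)
  unfold polyDepth
  congr 1
  ext k
  simp only [Set.mem_ofPred_eq, mem_span_range_X]
  constructor
  · rintro ⟨rs, rfl, hm, hr⟩
    refine ⟨rs.map φ, by simp, ?_, ?_⟩
    · simpa [hφ] using hm
    · refine (AddEquiv.isRegular_congr (e := e.toAddEquiv) ?_).1 hr
      exact List.forall₂_map_right_iff.2 (List.forall₂_same.2 fun r _ => he r)
  · rintro ⟨rs, rfl, hm, hr⟩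
    refine ⟨rs.map ψ, by simp, ?_, ?_⟩
    · intro r hr
      obtain ⟨s, hs, rfl⟩ := List.mem_map.1 hr
      rw [← hφ, hφψ]
      exact hm s hs
    · refine (AddEquiv.isRegular_congr (e := e.toAddEquiv) ?_).2 hr
      refine List.forall₂_map_left_iff.2 (List.forall₂_same.2 fun r _ y => ?_)
      rw [he, hφψ]

end PolyDepth

section KillVariable

variable (K : Type) [Field K] {n : ℕ} (p : Fin (n + 1))

/-- The substitution of zero for the `p`-th variable. -/
noncomputable def killVar : MvPolynomial (Fin (n + 1)) K →ₐ[K] MvPolynomial (Fin n) K :=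
  aeval (p.insertNth (α := fun _ => MvPolynomial (Fin n) K) 0 X)

@[simp]
lemma killVar_X_self : killVar K p (X p) = 0 := by
  simp [killVar]

@[simp]
lemma killVar_X_succAbove (i : Fin n) : killVar K p (X (p.succAbove i)) = X i := by
  simp [killVar]

@[simp]
lemma killVar_rename (f : MvPolynomial (Fin n) K) :
    killVar K p (rename p.succAbove f) = f := by
  have : (killVar K p).comp (rename p.succAbove) = AlgHom.id K (MvPolynomial (Fin n) K) := by
    ext i
    simp
  exact DFunLike.congr_fun this f

lemma constantCoeff_killVar (f : MvPolynomial (Fin (n + 1)) K) :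
    constantCoeff (killVar K p f) = constantCoeff f := by
  have : (constantCoeff : MvPolynomial (Fin n) K →+* K).comp (killVar K p).toRingHom =
      constantCoeff := by
    refine MvPolynomial.ringHom_ext (fun r => ?_) fun i => ?_
    · simp
    · obtain rfl | ⟨j, rfl⟩ := Fin.eq_self_or_eq_succAbove p i <;> simp
  exact DFunLike.congr_fun this f

lemma sub_rename_killVar_mem (f : MvPolynomial (Fin (n + 1)) K) :
    f - rename p.succAbove (killVar K p f) ∈
      Ideal.span {(X p : MvPolynomial (Fin (n + 1)) K)} := by
  have : (Ideal.Quotient.mkₐ K (Ideal.span {(X p : MvPolynomial (Fin (n + 1)) K)})) =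
      (Ideal.Quotient.mkₐ K (Ideal.span {(X p : MvPolynomial (Fin (n + 1)) K)})).comp
        ((rename p.succAbove).comp (killVar K p)) := by
    refine MvPolynomial.algHom_ext fun i => ?_
    obtain rfl | ⟨j, rfl⟩ := Fin.eq_self_or_eq_succAbove p i
    · simp
    · simp
  exact Ideal.Quotient.eq.1 (DFunLike.congr_fun this f)

/-- The part of a set of variables avoiding the `p`-th one. -/
noncomputable def initPart (G : Finset (Fin (n + 1))) : Finset (Fin n) :=
  G.preimage p.succAbove (Fin.succAbove_right_injective (p := p)).injOn

variable {p} in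
@[simp]
lemma mem_initPart {G : Finset (Fin (n + 1))} {i : Fin n} : i ∈ initPart p G ↔
    p.succAbove i ∈ G :=
  Finset.mem_preimage

lemma initPart_mono {G H : Finset (Fin (n + 1))} (h : G ⊆ H) : initPart p G ⊆ initPart p H :=
  fun _ hi => mem_initPart.2 (h (mem_initPart.1 hi))

@[simp]
lemma initPart_map (F : Finset (Fin n)) : initPart p (F.map p.succAboveEmb) = F := by
  ext i
  simp

@[simp]
lemma initPart_insert_self (G : Finset (Fin (n + 1))) :
    initPart p (insert p G) = initPart p G := by
  ext i
  simp

@[simp]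
lemma initPart_insert_succAbove (G : Finset (Fin (n + 1))) (i : Fin n) :
    initPart p (insert (p.succAbove i) G) = insert i (initPart p G) := by
  ext j
  simp

@[simp]
lemma initPart_erase_self (G : Finset (Fin (n + 1))) :
    initPart p (G.erase p) = initPart p G := by
  ext i
  simp

lemma map_initPart {G : Finset (Fin (n + 1))} (h : p ∉ G) :
    (initPart p G).map p.succAboveEmb = G := by
  ext i
  obtain rfl | ⟨j, rfl⟩ := Fin.eq_self_or_eq_succAbove p i <;> simp [h]

lemma rename_sqMon (F : Finset (Fin n)) :
    rename p.succAbove (sqMon K F) = sqMon K (F.map p.succAboveEmb) := by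
  simp [sqMon]

lemma killVar_sqMon {G : Finset (Fin (n + 1))} (h : p ∉ G) :
    killVar K p (sqMon K G) = sqMon K (initPart p G) := by
  rw [← map_initPart p h, ← rename_sqMon, killVar_rename, map_initPart p h]

lemma comap_killVar_sqIdeal {U : Set (Finset (Fin n))} :
    (sqIdeal K U).comap (killVar K p).toRingHom =
      sqIdeal K {G | p ∈ G ∨ initPart p G ∈ U} := by
  apply le_antisymm
  · intro f hf
    have h1 : sqIdeal K U ≤ (sqIdeal K {G | p ∈ G ∨ initPart p G ∈ U}).comap
        (rename p.succAbove) := by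
      refine Ideal.span_le.2 ?_
      rintro _ ⟨F, hF, rfl⟩
      rw [SetLike.mem_coe, Ideal.mem_comap, rename_sqMon]
      exact Ideal.subset_span ⟨_, Or.inr (by simpa using hF), rfl⟩
    have h2 : Ideal.span {X (p)} ≤
        sqIdeal K {G | p ∈ G ∨ initPart p G ∈ U} := by
      rw [Ideal.span_singleton_le_iff_mem]
      exact Ideal.subset_span ⟨{p}, by simp, by simp [sqMon]⟩
    have := Ideal.add_mem _ (h2 (sub_rename_killVar_mem K p f)) (h1 hf)
    simpa using this
  · refine Ideal.span_le.2 ?_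
    rintro _ ⟨G, hG, rfl⟩
    change killVar K p (sqMon K G) ∈ sqIdeal K U
    by_cases hx : p ∈ G
    · rw [sqMon, map_prod, Finset.prod_eq_zero hx (by simp)]
      exact Ideal.zero_mem _
    · rw [killVar_sqMon K p hx]
      exact Ideal.subset_span ⟨_, hG.resolve_left hx, rfl⟩

lemma polyDepth_sqIdeal_addVar (U : Set (Finset (Fin n))) :
    polyDepth K (sqIdeal K {G | p ∈ G ∨ initPart p G ∈ U}) =
      polyDepth K (sqIdeal K U) := by
  rw [← comap_killVar_sqIdeal]
  exact polyDepth_comap _ (rename p.succAbove : _ →ₐ[K] _).toRingHom (killVar_rename K p)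
    (constantCoeff_killVar K p) _

variable {K} in
lemma isUpperSet_initPart p {U : Set (Finset (Fin n))} (hU : IsUpperSet U) :
    IsUpperSet {G | initPart p G ∈ U} :=
  fun _ _ hGH hG => hU (initPart_mono p hGH) hG

variable {K} in
lemma sqExtVanishes_zero {σ : Type} [DecidableEq σ] {U : Set (Finset σ)} (hU : IsUpperSet U)
    (v : σ) (hv : ∀ G, insert v G ∈ U → G ∈ U) : SqExtVanishes K U 0 := by
  refine extVanishes_zero_of_regular (r := X v)
    (smul_residue_eq_zero (Ideal.subset_span (Set.mem_range_self _))) ?_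
  rw [isSMulRegular_iff_right_eq_zero_of_smul]
  intro y hy
  obtain ⟨y, rfl⟩ := Submodule.Quotient.mk_surjective _ y
  rw [← Submodule.Quotient.mk_smul, Submodule.Quotient.mk_eq_zero, smul_eq_mul,
    ← sqIdeal_colon hU] at hy
  exact (Submodule.Quotient.mk_eq_zero _).2 (sqIdeal_mono hv hy)

@[simp]
lemma initPart_empty : initPart p ∅ = ∅ := by
  ext
  simp

lemma forall_lt_sqExtVanishes_initPart_iff {B : Set (Finset (Fin n))} (hB : IsUpperSet B)
    (hB0 : ∅ ∉ B) (k : ℕ) :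
    (∀ i < k, SqExtVanishes K {G | initPart p G ∈ B} i) ↔
      k ≤ polyDepth K (sqIdeal K B) + 1 := by
  have hB' := isUpperSet_initPart p hB
  have hB1 : ∀ G, insert p G ∈ {G | initPart p G ∈ B} → G ∈ {G | initPart p G ∈ B} := by
    simp
  have hadd := fun i => sqExtVanishes_addVar_iff (K := K) hB' p hB1 (i := i)
  cases k with
  | zero => simp
  | succ k =>
    rw [Nat.add_le_add_iff_right, ← polyDepth_sqIdeal_addVar K p,
      ← forall_lt_sqExtVanishes_iff (by simpa using hB0)]
    constructor
    · intro h i hi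
      exact (hadd i).2 ⟨h i (by omega), h (i + 1) (by omega)⟩
    · intro h i hi
      cases i with
      | zero => exact sqExtVanishes_zero hB' p hB1
      | succ i => exact ((hadd i).1 (h i (by omega))).2

lemma polyDepth_sqIdeal_mixSet {A B : Set (Finset (Fin n))} (hA : IsUpperSet A)
    (hB : IsUpperSet B) (hne : A.Nonempty) (hB0 : ∅ ∉ B) (hsub : A ⊆ B)
    (hAB : ∀ v G, insert v G ∈ A → G ∈ B) :
    polyDepth K (sqIdeal K (mixSet p {G | initPart p G ∈ A} {G | initPart p G ∈ B})) =
      min (polyDepth K (sqIdeal K A)) (polyDepth K (sqIdeal K B) + 1) := by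
  have hA' := isUpperSet_initPart p hA
  have hB' := isUpperSet_initPart p hB
  have hA0 : ∅ ∉ A := fun h => hB0 (hsub h)
  have hB1 : ∀ G, insert p G ∈ {G | initPart p G ∈ B} → G ∈ {G | initPart p G ∈ B} := by
    simp
  have hmix : ∀ i, SqExtVanishes K
      (mixSet p {G | initPart p G ∈ A} {G | initPart p G ∈ B}) i ↔
      SqExtVanishes K {G | p ∈ G ∨ initPart p G ∈ A} i ∧
        SqExtVanishes K {G | initPart p G ∈ B} i := by
    intro i
    refine sqExtVanishes_mixSet_iff (p) hA' hB' (by simp) hB1 ?_ ?_ ?_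
    · obtain ⟨F, hF⟩ := hne
      exact ⟨F.map p.succAboveEmb, by simpa using hF⟩
    · simpa  using hB0
    · intro v G hG
      obtain rfl | ⟨w, rfl⟩ := Fin.eq_self_or_eq_succAbove p v
      · exact hsub (by simpa using hG)
      · exact hAB w _ (by simpa using hG)
  have hmix0 : ∅ ∉ mixSet p {G | initPart p G ∈ A} {G | initPart p G ∈ B} := by
    rintro (⟨-, h⟩ | ⟨h, -⟩)
    · rw [Set.mem_ofPred_eq, initPart_empty] at h
      exact hA0 h
    · exact Finset.notMem_empty _ h
  refine eq_of_forall_le_iff fun k => ?_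
  rw [le_min_iff, ← forall_lt_sqExtVanishes_initPart_iff K p hB hB0,
    ← polyDepth_sqIdeal_addVar K p A,
    ← forall_lt_sqExtVanishes_iff hmix0,
    ← forall_lt_sqExtVanishes_iff (by simpa  using hA0)]
  simp only [hmix, ← forall_and]

end KillVariable

section SquarefreePowers

variable (K : Type) [Field K] {σ : Type}

/-- The supports of the squarefree monomials in `I ^ k`. -/
def powSet (I : Ideal (MvPolynomial σ K)) (k : ℕ) : Set (Finset σ) :=
  {F | sqMon K F ∈ I ^ k}

lemma sqfreePower_eq_sqIdeal (I : Ideal (MvPolynomial σ K)) (k : ℕ) :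
    sqfreePower K I k = sqIdeal K (powSet K I k) := by
  unfold sqfreePower sqIdeal
  congr 1
  ext m
  constructor
  · rintro ⟨F, rfl, h⟩
    exact ⟨F, h, rfl⟩
  · rintro ⟨F, h, rfl⟩
    exact ⟨F, rfl, h⟩

variable {K}

lemma isUpperSet_powSet (I : Ideal (MvPolynomial σ K)) (k : ℕ) : IsUpperSet (powSet K I k) :=
  fun _ _ hFG hF => Ideal.mem_of_dvd _ (Finset.prod_dvd_prod_of_subset _ _ _ hFG) hF

lemma powSet_subset (I : Ideal (MvPolynomial σ K)) {k l : ℕ} (h : k ≤ l) :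
    powSet K I l ⊆ powSet K I k :=
  fun _ hF => Ideal.pow_le_pow_right h hF

lemma pderiv_mem_pow {I : Ideal (MvPolynomial σ K)} (v : σ) {k : ℕ} :
    ∀ {f : MvPolynomial σ K}, f ∈ I ^ (k + 1) → pderiv v f ∈ I ^ k := by
  induction k with
  | zero => simp
  | succ k ih =>
    intro f hf
    rw [pow_succ] at hf
    refine Submodule.mul_induction_on hf (fun a ha b hb => ?_) fun a b ha hb => ?_
    · rw [Derivation.leibniz, smul_eq_mul, smul_eq_mul]
      refine add_mem (Ideal.mul_mem_right _ _ ha) ?_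
      rw [pow_succ']
      exact Ideal.mul_mem_mul hb (ih ha)
    · rw [map_add]
      exact add_mem ha hb

variable [DecidableEq σ]

lemma sqMon_eq_mul_erase {F : Finset σ} {v : σ} (hv : v ∈ F) :
    sqMon K F = X v * sqMon K (F.erase v) :=
  (Finset.mul_prod_erase F _ hv).symm

lemma pderiv_sqMon {F : Finset σ} {v : σ} (hv : v ∈ F) :
    pderiv v (sqMon K F) = sqMon K (F.erase v) := by
  have h : pderiv v (sqMon K (F.erase v)) = 0 := by
    rw [sqMon_eq_monomial, pderiv_monomial, sum_single_one_apply]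
    simp
  rw [sqMon_eq_mul_erase hv, Derivation.leibniz, h]
  simp

lemma mem_powSet_of_insert (I : Ideal (MvPolynomial σ K)) (k : ℕ) (v : σ) (G : Finset σ)
    (h : insert v G ∈ powSet K I (k + 1)) : G ∈ powSet K I k := by
  by_cases hv : v ∈ G
  · rw [Finset.insert_eq_of_mem hv] at h
    exact powSet_subset I k.le_succ h
  · have := pderiv_mem_pow v h
    rwa [pderiv_sqMon (Finset.mem_insert_self v G), Finset.erase_insert hv] at this

end SquarefreePowers

section AdjoinVariable

variable {K : Type} [Field K] {n : ℕ}

lemma powSet_adjoin (p : Fin (n + 1)) (I : Ideal (MvPolynomial (Fin n) K)) (k : ℕ) :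
    powSet K (Ideal.map (rename p.succAbove) I ⊔
      Ideal.span {X p}) (k + 1) =
      mixSet p {G | initPart p G ∈ powSet K I (k + 1)}
        {G | initPart p G ∈ powSet K I k} := by
  set J := Ideal.map (rename p.succAbove) I ⊔
      Ideal.span {X p}
  have hφ : ∀ {l f}, f ∈ J ^ l → killVar K p f ∈ I ^ l := by
    intro l f hf
    have h1 : J.map (killVar K p) ≤ I := by
      rw [Ideal.map_le_iff_le_comap]
      refine sup_le (Ideal.map_le_iff_le_comap.2 fun f hf => ?_) ?_
      · rw [Ideal.mem_comap, Ideal.mem_comap, killVar_rename]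
        exact hf
      · rw [Ideal.span_singleton_le_iff_mem, Ideal.mem_comap, killVar_X_self]
        exact I.zero_mem
    refine Ideal.pow_right_mono h1 l ?_
    rw [← Ideal.map_pow]
    exact Ideal.mem_map_of_mem _ hf
  have hψ : ∀ {l G}, G ∈ powSet K I l → G.map p.succAboveEmb ∈ powSet K J l := by
    intro l G hG
    change sqMon K _ ∈ J ^ l
    rw [← rename_sqMon]
    refine Ideal.pow_right_mono (le_sup_left : _ ≤ J) l ?_
    rw [← Ideal.map_pow]
    exact Ideal.mem_map_of_mem _ hG
  have hinit : ∀ {l G}, p ∉ G → (G ∈ powSet K J l ↔ initPart p G ∈ powSet K I l) := by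
    intro l G hG
    constructor
    · intro h
      have := hφ h
      rwa [killVar_sqMon K p hG] at this
    · intro h
      have := hψ h
      rwa [map_initPart p hG] at this
  ext G
  by_cases hG : p ∈ G
  · have h1 : G ∈ powSet K J (k + 1) ↔ G.erase p ∈ powSet K J k := by
      constructor
      · intro h
        have := pderiv_mem_pow p h
        rwa [pderiv_sqMon hG] at this
      · intro h
        change sqMon K G ∈ J ^ (k + 1)
        rw [sqMon_eq_mul_erase hG, pow_succ']
        exact Ideal.mul_mem_mul (Ideal.mem_sup_right (Ideal.mem_span_singleton_self _)) h
    rw [h1, hinit (Finset.notMem_erase _ _), initPart_erase_self]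
    simp [mixSet, hG]
  · rw [hinit hG]
    simp [mixSet, hG]

lemma powSet_nonempty_of_le_monGrade {σ : Type} {I : Ideal (MvPolynomial σ K)} {k : ℕ}
    (hk : 1 ≤ k) (hkI : k ≤ monGrade K I) :
    (powSet K I k).Nonempty ∧ I ≠ ⊤ := by
  have hbdd : BddAbove {k | sqfreePower K I k ≠ ⊥} := by
    by_contra h
    have : monGrade K I = 0 := Nat.sSup_of_not_bddAbove h
    omega
  have hne : {k | sqfreePower K I k ≠ ⊥}.Nonempty := by
    by_contra h
    rw [Set.not_nonempty_iff_eq_empty] at h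
    have : monGrade K I = 0 := by rw [monGrade, h, csSup_empty]; rfl
    omega
  constructor
  · have h : sqfreePower K I (monGrade K I) ≠ ⊥ := Nat.sSup_mem hne hbdd
    refine Set.Nonempty.mono (powSet_subset I hkI) ?_
    by_contra hcon
    rw [Set.not_nonempty_iff_eq_empty] at hcon
    rw [sqfreePower_eq_sqIdeal, hcon] at h
    simp [sqIdeal] at h
  · rintro rfl
    obtain ⟨N, hN⟩ := hbdd
    have : N + 1 ≤ N := hN (by
      rw [Set.mem_ofPred_eq, Submodule.ne_bot_iff]
      exact ⟨1, Ideal.subset_span ⟨∅, by simp [sqMon], by simp [Ideal.top_pow]⟩, one_ne_zero⟩)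
    omega

lemma empty_notMem_powSet {σ : Type} {I : Ideal (MvPolynomial σ K)} (hI : I ≠ ⊤) {k : ℕ}
    (hk : k ≠ 0) : ∅ ∉ powSet K I k := by
  intro h
  refine hI ((Ideal.eq_top_iff_one I).2 (Ideal.pow_le_self hk ?_))
  simpa [powSet, sqMon] using h

lemma polyDepth_sqfreePower_adjoin (p : Fin (n + 1)) (I : Ideal (MvPolynomial (Fin n) K)) {k : ℕ}
    (hk : 2 ≤ k) (hkI : k ≤ monGrade K I) :
    polyDepth K (sqfreePower K (Ideal.map (rename p.succAbove) I ⊔ Ideal.span {X p}) k) =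
      min (polyDepth K (sqfreePower K I k)) (polyDepth K (sqfreePower K I (k - 1)) + 1) := by
  obtain ⟨k, rfl⟩ : ∃ l, k = l + 1 := ⟨k - 1, by omega⟩
  obtain ⟨hne, hI⟩ := powSet_nonempty_of_le_monGrade (by omega) hkI
  rw [Nat.add_sub_cancel, sqfreePower_eq_sqIdeal, sqfreePower_eq_sqIdeal, sqfreePower_eq_sqIdeal,
    powSet_adjoin]
  exact polyDepth_sqIdeal_mixSet K p (isUpperSet_powSet _ _) (isUpperSet_powSet _ _) hne
    (empty_notMem_powSet hI (by omega)) (powSet_subset I k.le_succ) (mem_powSet_of_insert I k)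

end AdjoinVariable

section ProjDim

variable {R : Type} [CommRing R]

lemma subsingleton_derivedExt_iff (M N : ModuleCat.{0} R) (d : ℕ) :
    Subsingleton (((Ext R (ModuleCat R) (d + 1)).obj (Opposite.op M)).obj N) ↔
      Subsingleton (Abelian.Ext M N (d + 1)) := by
  let P := projectiveResolution M
  have h1 : Subsingleton (((Ext R (ModuleCat R) (d + 1)).obj (Opposite.op M)).obj N) ↔
      ∀ f : P.complex.X (d + 1) ⟶ N, P.complex.d (d + 2) (d + 1) ≫ f = 0 →
        ∃ g : P.complex.X d ⟶ N, P.complex.d (d + 1) d ≫ g = f := by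
    rw [← ModuleCat.isZero_iff_subsingleton, (P.isoExt (R := R) (d + 1) N).isZero_iff,
      ← HomologicalComplex.exactAt_iff_isZero_homology,
      HomologicalComplex.exactAt_iff' _ d (d + 1) (d + 2) (by simp) (by simp),
      ShortComplex.moduleCat_exact_iff]
    rfl
  rw [h1, ← extVanishes_iff_subsingleton]
  constructor
  · intro h e
    obtain ⟨f, hf, rfl⟩ := P.extMk_surjective e (d + 2) rfl
    exact (P.extMk_eq_zero_iff f (d + 2) rfl hf d rfl).2 (h f hf)
  · intro h f hf
    exact (P.extMk_eq_zero_iff f (d + 2) rfl hf d rfl).1 (h _)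

lemma projDim_eq (M : Type) [AddCommGroup M] [Module R M] :
    projDim R M = sInf {d | HasProjectiveDimensionLT (ModuleCat.of R M) (d + 1)} := by
  unfold projDim
  congr 1
  ext d
  simp only [Set.mem_ofPred_eq, subsingleton_derivedExt_iff]
  exact ⟨fun h => hasProjectiveDimensionLT_of_enoughInjectives _ _ h,
    fun h N => HasProjectiveDimensionLT.subsingleton _ (d + 1) _ le_rfl N⟩

end ProjDim

section ProjDimBound

variable {K : Type} [Field K] {σ : Type}

lemma hasProjectiveDimensionLT_of_linearEquiv {R : Type} [CommRing R] {M N : Type}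
    [AddCommGroup M] [Module R M] [AddCommGroup N] [Module R N] (f : M ≃ₗ[R] N) {d : ℕ}
    (h : HasProjectiveDimensionLT (ModuleCat.of R M) d) :
    HasProjectiveDimensionLT (ModuleCat.of R N) d :=
  hasProjectiveDimensionLT_of_iso f.toModuleIso d

lemma hasProjectiveDimensionLT_mono {C : Type*} [Category C] [Abelian C] {X : C} {c d : ℕ}
    (h : HasProjectiveDimensionLT X c) (hcd : c ≤ d) : HasProjectiveDimensionLT X d :=
  hasProjectiveDimensionLT_of_ge X c d hcd

lemma hasProjectiveDimensionLT_zero_of_subsingleton {R : Type} [CommRing R] (M : Type)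
    [AddCommGroup M] [Module R M] [Subsingleton M] :
    HasProjectiveDimensionLT (ModuleCat.of R M) 0 :=
  (ModuleCat.isZero_of_subsingleton _).hasProjectiveDimensionLT_zero

lemma hasProjectiveDimensionLT_one_of_projective {R : Type} [CommRing R] (M : Type)
    [AddCommGroup M] [Module R M] [Module.Projective R M] :
    HasProjectiveDimensionLT (ModuleCat.of R M) 1 :=
  projective_iff_hasProjectiveDimensionLT_one.1 ((IsProjective.iff_projective _).1 ‹_›)

lemma sqIdeal_eq_top {U : Set (Finset σ)} (h : ∅ ∈ U) : sqIdeal K U = ⊤ :=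
  (Ideal.eq_top_iff_one _).2 (Ideal.subset_span ⟨∅, h, by simp [sqMon]⟩)

variable (K) in
/-- The quotient ring by the squarefree monomial ideal with monomials in `U`, as a module. -/
noncomputable abbrev sqQuot (U : Set (Finset σ)) : ModuleCat.{0} (MvPolynomial σ K) :=
  ModuleCat.of (MvPolynomial σ K) (MvPolynomial σ K ⧸ sqIdeal K U)

lemma hasProjectiveDimensionLT_sqQuot_of_mem {U : Set (Finset σ)} (h : ∅ ∈ U) (d : ℕ) :
    HasProjectiveDimensionLT (sqQuot K U) d := by
  have : Subsingleton (MvPolynomial σ K ⧸ sqIdeal K U) :=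
    Ideal.Quotient.subsingleton_iff.2 (sqIdeal_eq_top h)
  exact hasProjectiveDimensionLT_mono
    (hasProjectiveDimensionLT_zero_of_subsingleton _) (Nat.zero_le d)

variable [DecidableEq σ]

/-- The sequence `0 → S/(I : v) → S/I → S/(I, v) → 0`. -/
lemma sqIdeal_colonComplex_shortExact {U : Set (Finset σ)} (hU : IsUpperSet U) (v : σ) :
    (colonComplex (sqIdeal K {G | insert v G ∈ U}) (sqIdeal K U)
      (sqIdeal K {G | v ∈ G ∨ G ∈ U}) (X v) (fun f => (sqIdeal_colon hU v f).1)
      (sqIdeal_sup_span_X U v).symm).ShortExact :=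
  colonComplex_shortExact (sqIdeal_colon hU v) (sqIdeal_sup_span_X U v).symm

lemma hasProjectiveDimensionLT_sqQuot (T : Finset σ) :
    ∀ U : Set (Finset σ), IsUpperSet U → (∀ G, G ∈ U ↔ G ∩ T ∈ U) →
      HasProjectiveDimensionLT (sqQuot K U) (T.card + 1) := by
  induction T using Finset.induction_on with
  | empty =>
    intro U hU hT
    by_cases h : ∅ ∈ U
    · exact hasProjectiveDimensionLT_sqQuot_of_mem h _
    · have hUe : sqIdeal K U = ⊥ := by
        have : U = ∅ := by
          ext G
          rw [hT]
          simpa using h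
        rw [this]
        simp [sqIdeal]
      exact hasProjectiveDimensionLT_of_linearEquiv (Submodule.quotEquivOfEqBot _ hUe).symm
        (hasProjectiveDimensionLT_one_of_projective _)
  | insert v T hv ih =>
    intro U hU hT
    have h₀ : HasProjectiveDimensionLT (sqQuot K {G : Finset σ | G.erase v ∈ U}) (T.card + 1) := by
      refine ih _ (isUpperSet_erase hU v) fun G => ?_
      rw [Set.mem_ofPred_eq, Set.mem_ofPred_eq, hT, hT ((G ∩ T).erase v)]
      have : G.erase v ∩ insert v T = (G ∩ T).erase v ∩ insert v T := by
        ext i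
        simp only [Finset.mem_inter, Finset.mem_erase, Finset.mem_insert]
        tauto
      rw [this]
    have h₁ : HasProjectiveDimensionLT (sqQuot K {G : Finset σ | insert v G ∈ U}) (T.card + 1) := by
      refine ih _ (isUpperSet_insert hU v) fun G => ?_
      rw [Set.mem_ofPred_eq, Set.mem_ofPred_eq, hT, hT (insert v (G ∩ T))]
      have : insert v G ∩ insert v T = insert v (G ∩ T) ∩ insert v T := by
        ext i
        simp only [Finset.mem_inter, Finset.mem_insert]
        tauto
      rw [this]
    have h₂ : HasProjectiveDimensionLT (sqQuot K {G : Finset σ | v ∈ G ∨ G ∈ U}) (T.card + 2) :=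
      (colonComplex_shortExact (I' := sqIdeal K {G | v ∈ G ∨ G ∈ U}) (sqIdeal_erase_colon hU v)
        (by rw [← sqIdeal_sup_span_X_erase, sqIdeal_sup_span_X])).hasProjectiveDimensionLT_X₃
        (T.card + 1) h₀ (hasProjectiveDimensionLT_mono h₀ (by omega))
    rw [Finset.card_insert_of_notMem hv]
    exact (sqIdeal_colonComplex_shortExact hU v).hasProjectiveDimensionLT_X₂ (T.card + 2)
      (hasProjectiveDimensionLT_mono h₁ (by omega)) h₂

end ProjDimBound

section ExtOfRing

variable {K : Type} [Field K] {σ : Type} [DecidableEq σ] [Fintype σ]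

variable (K) in
lemma sqExtVanishes_disjoint_compl (T : Finset σ) :
    (∀ i < T.card, SqExtVanishes K {G | ¬ Disjoint G Tᶜ} i) ∧
      ¬ SqExtVanishes K {G | ¬ Disjoint G Tᶜ} T.card := by
  induction T using Finset.induction_on with
  | empty =>
    refine ⟨by simp, fun h => ?_⟩
    have hm : sqIdeal K {G : Finset σ | ¬ Disjoint G (∅ : Finset σ)ᶜ} =
        Ideal.span (Set.range (X : σ → MvPolynomial σ K)) := by
      refine le_antisymm (sqIdeal_le_span_range_X (by simp)) (Ideal.span_le.2 ?_)
      rintro _ ⟨v, rfl⟩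
      exact Ideal.subset_span ⟨{v}, by simp, by simp [sqMon]⟩
    unfold SqExtVanishes at h
    rw [Finset.card_empty, hm, extVanishes_zero_iff] at h
    have h1 := congrArg (fun f => f 1) (Subsingleton.elim
      (LinearMap.id : (MvPolynomial σ K ⧸ Ideal.span (Set.range (X : σ → MvPolynomial σ K))) →ₗ[
        MvPolynomial σ K] _) 0)
    have := Ideal.Quotient.nontrivial_iff.2 (span_range_X_ne_top (K := K) (σ := σ))
    exact one_ne_zero h1
  | insert v T hv ih =>
    have hU : IsUpperSet {G : Finset σ | ¬ Disjoint G (insert v T)ᶜ} :=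
      fun G H hGH hG h => hG (h.mono_left hGH)
    have hv' : ∀ G, insert v G ∈ {G : Finset σ | ¬ Disjoint G (insert v T)ᶜ} →
        G ∈ {G : Finset σ | ¬ Disjoint G (insert v T)ᶜ} := by
      intro G
      simp
    have h : ∀ i, SqExtVanishes K {G : Finset σ | ¬ Disjoint G Tᶜ} i ↔
        SqExtVanishes K {G : Finset σ | ¬ Disjoint G (insert v T)ᶜ} i ∧
          SqExtVanishes K {G : Finset σ | ¬ Disjoint G (insert v T)ᶜ} (i + 1) := fun i => by
      rw [← sqExtVanishes_addVar_iff hU v hv' (K := K) (i := i)]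
      have : {G : Finset σ | ¬ Disjoint G Tᶜ} =
          {G | v ∈ G ∨ G ∈ {G : Finset σ | ¬ Disjoint G (insert v T)ᶜ}} := by
        ext G
        simp only [Set.mem_ofPred_eq, Finset.not_disjoint_iff, Finset.mem_compl, Finset.mem_insert]
        constructor
        · rintro ⟨a, ha, haT⟩
          by_cases hav : a = v
          · exact Or.inl (hav ▸ ha)
          · exact Or.inr ⟨a, ha, by tauto⟩
        · rintro (h | ⟨a, ha, haT⟩)
          · exact ⟨v, h, hv⟩
          · exact ⟨a, ha, by tauto⟩
      rw [this]
    simp only [h] at ih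
    rw [Finset.card_insert_of_notMem hv]
    have hlt : ∀ i < T.card + 1, SqExtVanishes K {G : Finset σ | ¬ Disjoint G (insert v T)ᶜ} i := by
      intro i hi
      cases i with
      | zero => exact sqExtVanishes_zero hU v hv'
      | succ i => exact (ih.1 i (by omega)).2
    exact ⟨hlt, fun h => ih.2 ⟨hlt _ (by omega), h⟩⟩

variable (K σ) in
/-- The residue module of the polynomial ring at the origin. -/
noncomputable abbrev residue : ModuleCat.{0} (MvPolynomial σ K) :=
  ModuleCat.of (MvPolynomial σ K)
    (MvPolynomial σ K ⧸ Ideal.span (Set.range (X : σ → MvPolynomial σ K)))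

variable (K σ) in
lemma isExtDepth_residue_self :
    IsExtDepth (residue K σ) (ModuleCat.of _ (MvPolynomial σ K)) (Fintype.card σ) := by
  have h := sqExtVanishes_disjoint_compl K (Finset.univ : Finset σ)
  have h0 : sqIdeal K {G : Finset σ | ¬ Disjoint G (Finset.univ : Finset σ)ᶜ} = ⊥ := by
    simp [sqIdeal]
  have e := Submodule.quotEquivOfEqBot _ h0
  exact ⟨fun i hi => (h.1 i hi).of_linearEquiv e,
    fun h' => h.2 (h'.of_linearEquiv e.symm)⟩

end ExtOfRing

section LowerBound

variable {R : Type} [CommRing R] {N : ModuleCat.{0} R} {i : ℕ}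

lemma extVanishes_of_id_eq_sum {M : ModuleCat.{0} R} {ι : Type} [Fintype ι]
    {W : ι → ModuleCat.{0} R} (u : ∀ j, M ⟶ W j) (v : ∀ j, W j ⟶ M)
    (h : ∑ j, u j ≫ v j = 𝟙 M) (hW : ∀ j, ExtVanishes N (W j) i) : ExtVanishes N M i := by
  intro e
  have he : e.comp (Abelian.Ext.mk₀ (∑ j, u j ≫ v j)) (add_zero i) = e := by
    rw [h, Abelian.Ext.comp_mk₀_id]
  rw [← he, Abelian.Ext.mk₀_sum, Abelian.Ext.comp_sum]
  refine Finset.sum_eq_zero fun j _ => ?_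
  rw [← Abelian.Ext.mk₀_comp_mk₀, ← Abelian.Ext.comp_assoc_of_third_deg_zero,
    hW j (Abelian.Ext.comp _ _ _), Abelian.Ext.zero_comp]

lemma extVanishes_of_projective (M : Type) [AddCommGroup M] [Module R M] [Module.Finite R M]
    [Module.Projective R M] (h : ExtVanishes N (ModuleCat.of R R) i) :
    ExtVanishes N (ModuleCat.of R M) i := by
  obtain ⟨k, f, hf⟩ := Module.Finite.exists_fin' R M
  obtain ⟨s, hs⟩ := Module.projective_lifting_property f LinearMap.id hf
  refine extVanishes_of_id_eq_sum (W := fun _ : Fin k => ModuleCat.of R R)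
    (fun j => ModuleCat.ofHom (LinearMap.proj j ∘ₗ s))
    (fun j => ModuleCat.ofHom (f ∘ₗ LinearMap.single R (fun _ => R) j)) ?_ fun _ => h
  ext x
  have : ∑ j, f (Pi.single j (s x j)) = x := by
    rw [← map_sum, Finset.univ_sum_single]
    exact LinearMap.congr_fun hs x
  simpa [ModuleCat.hom_sum] using this

lemma extVanishes_of_hasProjectiveDimensionLT [IsNoetherianRing R] {n : ℕ}
    (hN : ∀ i < n, ExtVanishes N (ModuleCat.of R R) i) (e : ℕ) :
    ∀ (M : Type) [AddCommGroup M] [Module R M] [Module.Finite R M],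
      HasProjectiveDimensionLT (ModuleCat.of R M) (e + 1) → ∀ i, i + e < n →
        ExtVanishes N (ModuleCat.of R M) i := by
  induction e with
  | zero =>
    intro M _ _ _ hM i hi
    have : Module.Projective R M :=
      (IsProjective.iff_projective _).2 (projective_iff_hasProjectiveDimensionLT_one.2 hM)
    exact extVanishes_of_projective M (hN i hi)
  | succ e ih =>
    intro M _ _ _ hM i hi
    obtain ⟨k, f, hf⟩ := Module.Finite.exists_fin' R M
    have hS := LinearMap.shortExact_shortComplexKer hf
    have hZ := hS.hasProjectiveDimensionLT_X₁ (e + 1) (hasProjectiveDimensionLT_mono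
      (hasProjectiveDimensionLT_one_of_projective (Fin k → R)) (by omega)) hM
    exact extVanishes_of_shortExact_X₃ hS (ih _ hZ (i + 1) (by omega))
      (extVanishes_of_projective (Fin k → R) (hN i (by omega)))

end LowerBound

section Descent

variable {R : Type} [CommRing R] {m : Ideal R}

lemma mem_smul_top_pi {k : ℕ} {x : Fin k → R} (hx : ∀ j, x j ∈ m) :
    x ∈ m • (⊤ : Submodule R (Fin k → R)) := by
  have : x = ∑ j, x j • (Pi.single j 1 : Fin k → R) := by
    ext l
    simp [Finset.sum_apply, Pi.single_apply]
  rw [this]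
  exact sum_mem fun j _ => Submodule.smul_mem_smul (hx j) trivial

lemma apply_mem_of_mem_smul_top {P : Type} [AddCommGroup P] [Module R P] {x : P}
    (hx : x ∈ m • (⊤ : Submodule R P)) (φ : P →ₗ[R] R) : φ x ∈ m := by
  refine Submodule.smul_induction_on hx (fun r hr y _ => ?_) fun y z hy hz => ?_
  · rw [map_smul]
    exact m.mul_mem_right _ hr
  · rw [map_add]
    exact add_mem hy hz

lemma apply_mem_smul_top {P Q : Type} [AddCommGroup P] [Module R P] [AddCommGroup Q] [Module R Q]
    {x : P} (hx : x ∈ m • (⊤ : Submodule R P)) (f : P →ₗ[R] Q) :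
    f x ∈ m • (⊤ : Submodule R Q) := by
  have := Submodule.mem_map_of_mem (f := f) hx
  rw [Submodule.map_smul''] at this
  exact Submodule.smul_mono le_rfl le_top this

lemma ext_comp_toSpanSingleton_eq_zero {N : ModuleCat.{0} R} {n : ℕ}
    (hN : ∀ r ∈ m, ∀ y : N, r • y = 0) {k : ℕ} {x : Fin k → R} (hx : ∀ j, x j ∈ m)
    (e : Abelian.Ext N (ModuleCat.of R R) n) :
    e.comp (Abelian.Ext.mk₀ (ModuleCat.ofHom (LinearMap.toSpanSingleton R (Fin k → R) x)))
      (add_zero n) = 0 := by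
  have h : ModuleCat.ofHom (LinearMap.toSpanSingleton R (Fin k → R) x) =
      ∑ t, x t • ModuleCat.ofHom (LinearMap.single R (fun _ : Fin k => R) t) := by
    ext
    simp [ModuleCat.hom_sum, Pi.single_apply]
  rw [h, Abelian.Ext.mk₀_sum, Abelian.Ext.comp_sum]
  refine Finset.sum_eq_zero fun t _ => ?_
  rw [Abelian.Ext.mk₀_smul, Abelian.Ext.comp_smul]
  exact ext_smul_eq_zero (hN _ (hx t)) _

lemma ext_smul_eq_zero_of_comp_toSpanSingleton {N : ModuleCat.{0} R} {n : ℕ} {C : Type}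
    [AddCommGroup C] [Module R C] {c : C} (e : Abelian.Ext N (ModuleCat.of R R) n)
    (h : e.comp (Abelian.Ext.mk₀ (ModuleCat.ofHom (LinearMap.toSpanSingleton R C c)))
      (add_zero n) = 0) (φ : C →ₗ[R] R) : φ c • e = 0 := by
  have h1 : ModuleCat.ofHom (LinearMap.toSpanSingleton R C c) ≫ ModuleCat.ofHom φ =
      φ c • 𝟙 (ModuleCat.of R R) := by
    ext
    simp
  have h2 : e.comp (Abelian.Ext.mk₀ (φ c • 𝟙 (ModuleCat.of R R))) (add_zero n) = 0 := by
    rw [← h1, ← Abelian.Ext.mk₀_comp_mk₀, ← Abelian.Ext.comp_assoc_of_third_deg_zero, h,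
      Abelian.Ext.zero_comp]
  rwa [Abelian.Ext.mk₀_smul, Abelian.Ext.comp_smul, Abelian.Ext.comp_mk₀_id] at h2

lemma ext_eq_zero_of_smul_eq_zero [m.IsMaximal] {N M : ModuleCat.{0} R} {n : ℕ}
    (hN : ∀ r ∈ m, ∀ y : N, r • y = 0) {r : R} (hr : r ∉ m) {e : Abelian.Ext N M n}
    (h : r • e = 0) : e = 0 := by
  obtain ⟨w, z, hz, hw⟩ := Ideal.IsMaximal.exists_inv (I := m) inferInstance hr
  have h1 : (w * r + z) • e = 0 := by
    rw [add_smul, mul_smul, h, smul_zero, zero_add]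
    exact ext_smul_eq_zero (hN z hz) e
  rwa [hw, one_smul] at h1

lemma ext_comp_toSpanSingleton_comp_eq_zero {N : ModuleCat.{0} R} {n : ℕ}
    (hN : ∀ r ∈ m, ∀ y : N, r • y = 0) {C : Type} [AddCommGroup C] [Module R C] {k : ℕ}
    (i : C →ₗ[R] (Fin k → R)) {c : C} (hc : ∀ j, i c j ∈ m)
    (e : Abelian.Ext N (ModuleCat.of R R) n) :
    (e.comp (Abelian.Ext.mk₀ (ModuleCat.ofHom (LinearMap.toSpanSingleton R C c)))
      (add_zero n)).comp (Abelian.Ext.mk₀ (ModuleCat.ofHom i)) (add_zero n) = 0 := by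
  have h : ModuleCat.ofHom (LinearMap.toSpanSingleton R C c) ≫ ModuleCat.ofHom i =
      ModuleCat.ofHom (LinearMap.toSpanSingleton R (Fin k → R) (i c)) := by
    rw [← ModuleCat.ofHom_comp, LinearMap.comp_toSpanSingleton]
  rw [Abelian.Ext.comp_assoc_of_third_deg_zero, Abelian.Ext.mk₀_comp_mk₀, h]
  exact ext_comp_toSpanSingleton_eq_zero hN hc e

lemma mem_smul_top_of_forall_apply_mem {C : Type} [AddCommGroup C] [Module R C]
    [Module.Finite R C] [Module.Projective R C] {c : C} (h : ∀ φ : C →ₗ[R] R, φ c ∈ m) :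
    c ∈ m • (⊤ : Submodule R C) := by
  obtain ⟨l, π, hπ⟩ := Module.Finite.exists_fin' R C
  obtain ⟨s, hs⟩ := Module.projective_lifting_property π LinearMap.id hπ
  have hπs : π (s c) = c := LinearMap.congr_fun hs c
  have hs' : s c ∈ m • (⊤ : Submodule R (Fin l → R)) := by
    refine mem_smul_top_pi fun j => ?_
    have := h (LinearMap.proj j ∘ₗ s)
    rwa [LinearMap.comp_apply, LinearMap.proj_apply] at this
  have := apply_mem_smul_top hs' π
  rwa [hπs] at this

/-- An injection on top `Ext` reflects membership in `m • ⊤`. -/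
lemma mem_smul_top_of_ext_injective [m.IsMaximal] {N : ModuleCat.{0} R} {n : ℕ}
    (hN : ∀ r ∈ m, ∀ y : N, r • y = 0) (hn : ¬ ExtVanishes N (ModuleCat.of R R) n)
    {C : Type} [AddCommGroup C] [Module R C] [Module.Finite R C] [Module.Projective R C] {k : ℕ}
    (i : C →ₗ[R] (Fin k → R))
    (hi : ∀ y : Abelian.Ext N (ModuleCat.of R C) n,
      y.comp (Abelian.Ext.mk₀ (ModuleCat.ofHom i)) (add_zero n) = 0 → y = 0)
    {c : C} (hc : i c ∈ m • (⊤ : Submodule R (Fin k → R))) : c ∈ m • (⊤ : Submodule R C) := by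
  refine mem_smul_top_of_forall_apply_mem fun φ => ?_
  by_contra hj
  refine hn fun e => ?_
  have h1 := hi _ (ext_comp_toSpanSingleton_comp_eq_zero hN i
      (fun t => apply_mem_of_mem_smul_top hc (LinearMap.proj t)) e)
  have h3 := ext_smul_eq_zero_of_comp_toSpanSingleton e h1 φ
  exact ext_eq_zero_of_smul_eq_zero hN hj h3

/-- A map from a free module splitting a map that is injective modulo `m`, modulo `m`. -/
lemma exists_retraction_mod [m.IsMaximal] {C F : Type} [AddCommGroup C] [Module R C]
    [AddCommGroup F] [Module R F] [Module.Projective R F] (i : C →ₗ[R] F)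
    (hi : ∀ c, i c ∈ m • (⊤ : Submodule R F) → c ∈ m • (⊤ : Submodule R C)) :
    ∃ ρ : F →ₗ[R] C, ∀ c, ρ (i c) - c ∈ m • (⊤ : Submodule R C) := by
  let := Ideal.Quotient.field m
  let ibar : (C ⧸ m • (⊤ : Submodule R C)) →ₗ[R] (F ⧸ m • (⊤ : Submodule R F)) :=
    Submodule.mapQ _ _ i fun c hc => apply_mem_smul_top hc i
  let ibar' : (C ⧸ m • (⊤ : Submodule R C)) →ₗ[R ⧸ m] (F ⧸ m • (⊤ : Submodule R F)) :=
    ibar.extendScalarsOfSurjective Ideal.Quotient.mk_surjective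
  have hker : LinearMap.ker ibar' = ⊥ := by
    rw [LinearMap.ker_eq_bot']
    intro x hx
    obtain ⟨x, rfl⟩ := Submodule.Quotient.mk_surjective _ x
    exact (Submodule.Quotient.mk_eq_zero _).2 (hi x ((Submodule.Quotient.mk_eq_zero _).1 hx))
  obtain ⟨r, hr⟩ := LinearMap.exists_leftInverse_of_injective ibar' hker
  obtain ⟨ρ, hρ⟩ := Module.projective_lifting_property (Submodule.mkQ (m • (⊤ : Submodule R C)))
    ((r.restrictScalars R) ∘ₗ (Submodule.mkQ (m • (⊤ : Submodule R F))))
    (Submodule.mkQ_surjective _)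
  refine ⟨ρ, fun c => ?_⟩
  rw [← Submodule.Quotient.eq]
  exact (LinearMap.congr_fun hρ (i c)).trans
    (LinearMap.congr_fun hr (Submodule.Quotient.mk c))

lemma exists_eq_sum_smul_of_range_le {C : Type} [AddCommGroup C] [Module R C]
    [Module.Projective R C] {ι : Type} [Fintype ι] {x : ι → R} (hx : Ideal.span (Set.range x) = m)
    (h : C →ₗ[R] C) (hh : ∀ c, h c ∈ m • (⊤ : Submodule R C)) :
    ∃ g : ι → C →ₗ[R] C, ∀ c, h c = ∑ j, x j • g j c := by
  let q : (ι → C) →ₗ[R] C := ∑ j, x j • LinearMap.proj j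
  have hq : ∀ y, q y = ∑ j, x j • y j := by
    intro y
    simp [q]
  have hrange : ∀ c, h c ∈ LinearMap.range q := by
    intro c
    refine (?_ : m • (⊤ : Submodule R C) ≤ _) (hh c)
    rw [← hx, Submodule.span_smul_eq]
    refine Submodule.set_smul_le _ _ _ ?_
    rintro _ y ⟨j, rfl⟩ -
    classical
    refine ⟨Pi.single j y, ?_⟩
    rw [hq, Finset.sum_eq_single j]
    · simp
    · intro l _ hl
      simp [Pi.single_eq_of_ne hl]
    · simp
  obtain ⟨g, hg⟩ := Module.projective_lifting_property q.rangeRestrict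
    (h.codRestrict (LinearMap.range q) hrange) q.surjective_rangeRestrict
  refine ⟨fun j => LinearMap.proj j ∘ₗ g, fun c => ?_⟩
  have := congrArg Subtype.val (LinearMap.congr_fun hg c)
  exact (this.symm.trans (hq _))

end Descent

section DescentStep

variable {R : Type} [CommRing R] {m : Ideal R}

/-- If a scalar kills `Ext¹(M, S.X₁)`, it factors on `S.X₁` through the middle term. -/
lemma exists_extension_of_smul_eq_zero {S : ShortComplex (ModuleCat.{0} R)} (hS : S.ShortExact)
    {r : R} (hr : ∀ e : Abelian.Ext S.X₃ S.X₁ 1, r • e = 0) :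
    ∃ g : S.X₂ ⟶ S.X₁, S.f ≫ g = r • 𝟙 S.X₁ := by
  obtain ⟨x, hx⟩ := Abelian.Ext.contravariant_sequence_exact₁ hS S.X₁
    (Abelian.Ext.mk₀ (r • 𝟙 S.X₁)) (add_zero 1)
    (by rw [Abelian.Ext.mk₀_smul, Abelian.Ext.comp_smul, Abelian.Ext.comp_mk₀_id, hr])
  obtain ⟨g, rfl⟩ := (Abelian.Ext.mk₀_bijective S.X₂ S.X₁).2 x
  rw [Abelian.Ext.mk₀_comp_mk₀] at hx
  exact ⟨g, (Abelian.Ext.mk₀_bijective S.X₁ S.X₁).1 hx⟩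

/-- The third term of a split short exact sequence with projective middle term is projective. -/
lemma hasProjectiveDimensionLT_one_of_retraction {S : ShortComplex (ModuleCat.{0} R)}
    (hS : S.ShortExact) (h₂ : Projective S.X₂) (g : S.X₂ ⟶ S.X₁) (hg : S.f ≫ g = 𝟙 S.X₁) :
    HasProjectiveDimensionLT S.X₃ 1 := by
  have := (ShortComplex.Splitting.ofExactOfRetraction S hS.exact g hg hS.epi_g)
  have h : Retract S.X₃ S.X₂ := ⟨this.s, S.g, this.s_g⟩
  exact projective_iff_hasProjectiveDimensionLT_one.1 h.projective

lemma hasProjectiveDimensionLT_one_of_smul_ext_eq_zero [IsNoetherianRing R] [m.IsMaximal]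
    {N : ModuleCat.{0} R} {n : ℕ} (hN : ∀ r ∈ m, ∀ y : N, r • y = 0)
    (hn : ¬ ExtVanishes N (ModuleCat.of R R) (n + 1))
    {M : Type} [AddCommGroup M] [Module R M] [Module.Finite R M]
    (hM : HasProjectiveDimensionLT (ModuleCat.of R M) 2)
    (hr : ∀ r ∈ m, ∀ (Y : ModuleCat.{0} R) (e : Abelian.Ext (ModuleCat.of R M) Y 1), r • e = 0)
    (hNM : ExtVanishes N (ModuleCat.of R M) n) :
    HasProjectiveDimensionLT (ModuleCat.of R M) 1 := by
  obtain ⟨k, f, hf⟩ := Module.Finite.exists_fin' R M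
  have hS := LinearMap.shortExact_shortComplexKer hf
  have hF : Projective (ModuleCat.of R (Fin k → R)) :=
    (IsProjective.iff_projective _).1 inferInstance
  have hC : Module.Projective R (LinearMap.ker f) := by
    have : HasProjectiveDimensionLT (ModuleCat.of R (LinearMap.ker f)) 1 :=
      hS.hasProjectiveDimensionLT_X₁ 1 (hasProjectiveDimensionLT_mono
        (hasProjectiveDimensionLT_one_of_projective (Fin k → R)) (by omega)) hM
    exact (IsProjective.iff_projective _).2 (projective_iff_hasProjectiveDimensionLT_one.2 this)
  have hi : ∀ c : LinearMap.ker f, (LinearMap.ker f).subtype c ∈ m • (⊤ : Submodule R (Fin k → R)) →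
      c ∈ m • (⊤ : Submodule R (LinearMap.ker f)) := by
    intro c hc
    refine mem_smul_top_of_ext_injective hN hn (LinearMap.ker f).subtype (fun y hy => ?_) hc
    obtain ⟨x, rfl⟩ := Abelian.Ext.covariant_sequence_exact₁ N hS y hy rfl
    have hx : x = 0 := hNM x
    rw [hx, Abelian.Ext.zero_comp]
  obtain ⟨ρ, hρ⟩ := exists_retraction_mod (LinearMap.ker f).subtype hi
  obtain ⟨t, x, hx⟩ := Submodule.fg_iff_exists_fin_generating_family.1 (IsNoetherian.noetherian m)
  obtain ⟨h, hh⟩ := exists_eq_sum_smul_of_range_le hx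
    (ρ ∘ₗ (LinearMap.ker f).subtype - LinearMap.id) hρ
  choose g hg using fun j => exists_extension_of_smul_eq_zero hS
    (hr (x j) (hx ▸ Submodule.subset_span (Set.mem_range_self j)) _)
  refine hasProjectiveDimensionLT_one_of_retraction hS hF
    (ModuleCat.ofHom (ρ - ∑ j, h j ∘ₗ (g j).hom)) ?_
  ext c : 2
  have h1 : ∀ j, (g j).hom (c : Fin k → R) = x j • c := fun j =>
    LinearMap.congr_fun (congrArg ModuleCat.Hom.hom (hg j)) c
  have h2 := hh c
  have h3 : ρ (c : Fin k → R) - ∑ j, h j ((g j).hom (c : Fin k → R)) = c := by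
    simp only [h1, map_smul, ← h2]
    simp
  have h4 : (ρ - ∑ j, h j ∘ₗ (g j).hom) (c : Fin k → R) = c := by
    rw [LinearMap.sub_apply, LinearMap.sum_apply]
    exact h3
  exact h4

lemma hasProjectiveDimensionLT_of_smul_ext_eq_zero [IsNoetherianRing R] [m.IsMaximal]
    {N : ModuleCat.{0} R} {n : ℕ} (hN : ∀ r ∈ m, ∀ y : N, r • y = 0)
    (hn : IsExtDepth N (ModuleCat.of R R) n) (e : ℕ) :
    ∀ (M : Type) [AddCommGroup M] [Module R M] [Module.Finite R M] (d : ℕ), d + e + 1 = n →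
      HasProjectiveDimensionLT (ModuleCat.of R M) (e + 2) →
      (∀ r ∈ m, ∀ (Y : ModuleCat.{0} R) (x : Abelian.Ext (ModuleCat.of R M) Y (e + 1)),
        r • x = 0) →
      ExtVanishes N (ModuleCat.of R M) d → HasProjectiveDimensionLT (ModuleCat.of R M) (e + 1) := by
  induction e with
  | zero =>
    intro M _ _ _ d hd hM hr hNM
    subst hd
    exact hasProjectiveDimensionLT_one_of_smul_ext_eq_zero hN hn.2 hM hr hNM
  | succ e ih =>
    intro M _ _ _ d hd hM hr hNM
    obtain ⟨k, f, hf⟩ := Module.Finite.exists_fin' R M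
    have hS := LinearMap.shortExact_shortComplexKer hf
    have hF1 : HasProjectiveDimensionLT (ModuleCat.of R (Fin k → R)) 1 :=
      hasProjectiveDimensionLT_one_of_projective _
    have hZ := hS.hasProjectiveDimensionLT_X₁ (e + 2)
      (hasProjectiveDimensionLT_mono hF1 (by omega)) hM
    refine hS.hasProjectiveDimensionLT_X₃ (e + 1)
      (ih (LinearMap.ker f) (d + 1) (by omega) hZ (fun r hrm Y x => ?_) ?_)
      (hasProjectiveDimensionLT_mono hF1 (by omega))
    · have h0 : hS.extClass.comp (r • x) (add_comm 1 (e + 1)) = 0 := by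
        rw [Abelian.Ext.comp_smul]
        exact hr r hrm Y _
      obtain ⟨y, hy⟩ := Abelian.Ext.contravariant_sequence_exact₁ hS Y (r • x) _ h0
      have : y = 0 := y.eq_zero_of_hasProjectiveDimensionLT 1 (by omega)
      rw [← hy, this, Abelian.Ext.comp_zero]
    · exact extVanishes_of_shortExact_X₁_succ hS
        (extVanishes_of_projective (Fin k → R) (hn.1 _ (by omega))) hNM

end DescentStep

section BaseChange

open TensorProduct

lemma baseChange_ker_exact {R A M N : Type} [CommRing R] [CommRing A] [Algebra R A]
    [Module.Flat R A] [AddCommGroup M] [Module R M] [AddCommGroup N] [Module R N]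
    {f : M →ₗ[R] N} (hf : Function.Surjective f) :
    Function.Injective ((LinearMap.ker f).subtype.baseChange A) ∧
      Function.Exact ((LinearMap.ker f).subtype.baseChange A) (f.baseChange A) ∧
      Function.Surjective (f.baseChange A) :=
  have he : Function.Exact (LinearMap.ker f).subtype f := f.exact_subtype_ker_map
  ⟨Module.Flat.lTensor_preserves_injective_linearMap _ (Submodule.injective_subtype _),
    lTensor_exact A he hf, LinearMap.lTensor_surjective A hf⟩

lemma hasProjectiveDimensionLT_baseChange {R A : Type} [CommRing R] [CommRing A] [Algebra R A]
    [Module.Flat R A] (d : ℕ) : ∀ (M : Type) [AddCommGroup M] [Module R M],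
      HasProjectiveDimensionLT (ModuleCat.of R M) d →
        HasProjectiveDimensionLT (ModuleCat.of A (A ⊗[R] M)) d := by
  induction d with
  | zero =>
    intro M _ _ hM
    have : Subsingleton M := ModuleCat.subsingleton_of_isZero
      ((hasProjectiveDimensionLT_zero_iff_isZero _).1 hM)
    have : Subsingleton (A ⊗[R] M) := inferInstance
    exact hasProjectiveDimensionLT_zero_of_subsingleton _
  | succ d ih =>
    intro M _ _ hM
    cases d with
    | zero =>
      have : Module.Projective R M := (IsProjective.iff_projective _).2
        (projective_iff_hasProjectiveDimensionLT_one.2 hM)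
      exact hasProjectiveDimensionLT_one_of_projective _
    | succ d =>
      have hf : Function.Surjective (Finsupp.linearCombination R (id : M → M)) :=
        Finsupp.linearCombination_id_surjective R M
      let f := Finsupp.linearCombination R (id : M → M)
      have hS := LinearMap.shortExact_shortComplexKer hf
      have hZ := hS.hasProjectiveDimensionLT_X₁ (d + 1)
        (hasProjectiveDimensionLT_mono (hasProjectiveDimensionLT_one_of_projective _)
          (by omega)) hM
      obtain ⟨hi, he, hs⟩ := baseChange_ker_exact (A := A) hf
      let T : ShortComplex (ModuleCat.{0} A) :=
        ShortComplex.mk (ModuleCat.ofHom ((LinearMap.ker f).subtype.baseChange A))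
          (ModuleCat.ofHom (f.baseChange A))
          (ModuleCat.hom_ext (LinearMap.ext he.apply_apply_eq_zero))
      have hT : T.ShortExact :=
        { exact := (ShortComplex.ShortExact.moduleCat_exact_iff_function_exact T).2 he
          mono_f := (ModuleCat.mono_iff_injective _).2 hi
          epi_g := (ModuleCat.epi_iff_surjective _).2 hs }
      exact hT.hasProjectiveDimensionLT_X₃ (d + 1) (ih _ hZ)
        (hasProjectiveDimensionLT_mono (hasProjectiveDimensionLT_one_of_projective _)
          (by omega))

variable (K : Type) [Field K] {n : ℕ} (p : Fin (n + 1))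

lemma flat_rename_succAbove :
    (rename p.succAbove :
      MvPolynomial (Fin n) K →ₐ[K] MvPolynomial (Fin (n + 1)) K).toRingHom.Flat := by
  let e := (optionEquivLeft K (Fin n)).symm.trans (renameEquiv K (finSuccEquiv' p).symm)
  have h : (rename p.succAbove :
      MvPolynomial (Fin n) K →ₐ[K] MvPolynomial (Fin (n + 1)) K).toRingHom
      = (e : Polynomial (MvPolynomial (Fin n) K) →+* _).comp Polynomial.C := by
    refine MvPolynomial.ringHom_ext (fun r => ?_) (fun i => ?_)
    · simp [e]
    · simp [e]
  rw [h]
  refine RingHom.Flat.comp ?_ (RingHom.Flat.of_bijective e.bijective)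
  exact (RingHom.flat_algebraMap_iff (R := MvPolynomial (Fin n) K)
    (S := Polynomial (MvPolynomial (Fin n) K))).2 inferInstance

lemma hasProjectiveDimensionLT_sqQuot_initPart {U : Set (Finset (Fin n))} (hU : IsUpperSet U)
    {d : ℕ} (h : HasProjectiveDimensionLT (sqQuot K U) d) :
    HasProjectiveDimensionLT (sqQuot K {G | initPart p G ∈ U}) d := by
  have hflat := flat_rename_succAbove K p
  algebraize [(rename p.succAbove :
    MvPolynomial (Fin n) K →ₐ[K] MvPolynomial (Fin (n + 1)) K).toRingHom]
  have hmap : (sqIdeal K U).map (algebraMap (MvPolynomial (Fin n) K) (MvPolynomial (Fin (n + 1)) K))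
      = sqIdeal K {G | initPart p G ∈ U} := by
    have hU' := isUpperSet_initPart p hU
    rw [sqIdeal, Ideal.map_span]
    refine le_antisymm (Ideal.span_le.2 ?_) (Ideal.span_le.2 ?_)
    · rintro _ ⟨_, ⟨F, hF, rfl⟩, rfl⟩
      change rename p.succAbove (sqMon K F) ∈ _
      rw [rename_sqMon]
      exact (sqMon_mem_sqIdeal hU').2 (by simpa using hF)
    · rintro _ ⟨G, hG, rfl⟩
      have hsub : (initPart p G).map p.succAboveEmb ⊆ G := fun i hi => by
        obtain ⟨j, hj, rfl⟩ := Finset.mem_map.1 hi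
        exact mem_initPart.1 hj
      refine Ideal.mem_of_dvd _ (Finset.prod_dvd_prod_of_subset _ _ _ hsub)
        (?_ : sqMon K ((initPart p G).map p.succAboveEmb) ∈ _)
      rw [← rename_sqMon]
      exact Ideal.subset_span ⟨_, ⟨_, hG, rfl⟩, rfl⟩
  have h1 := hasProjectiveDimensionLT_baseChange (A := MvPolynomial (Fin (n + 1)) K) d _ h
  refine hasProjectiveDimensionLT_of_linearEquiv ?_ h1
  exact (Ideal.qoutMapEquivTensorQout _).symm.trans (Submodule.quotEquivOfEq _ _ hmap)

end BaseChange

section SquarefreeProjDim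

variable {K : Type} [Field K]

instance isMaximal_span_range_X {σ : Type} :
    (Ideal.span (Set.range (X : σ → MvPolynomial σ K))).IsMaximal := by
  have h : Ideal.span (Set.range (X : σ → MvPolynomial σ K)) =
      RingHom.ker (constantCoeff : MvPolynomial σ K →+* K) := by
    ext f
    rw [mem_span_range_X, RingHom.mem_ker]
  rw [h]
  exact RingHom.ker_isMaximal_of_surjective _ fun r => ⟨C r, constantCoeff_C _ r⟩

lemma smul_ext_eq_zero_of_shortExact {R : Type} [CommRing R] {S : ShortComplex (ModuleCat.{0} R)}
    (hS : S.ShortExact) {d : ℕ} (h : HasProjectiveDimensionLT S.X₁ d) {r : R}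
    (hr : ∀ z : S.X₃, r • z = 0) (Y : ModuleCat.{0} R) (x : Abelian.Ext S.X₂ Y d) : r • x = 0 := by
  obtain ⟨y, rfl⟩ := Abelian.Ext.contravariant_sequence_exact₂ hS Y x
    (Abelian.Ext.eq_zero_of_hasProjectiveDimensionLT _ d le_rfl)
  rw [← Abelian.Ext.comp_smul, ext_smul_eq_zero hr, Abelian.Ext.comp_zero]

lemma smul_ext_sqQuot_eq_zero {σ : Type} [DecidableEq σ] {U : Set (Finset σ)} (hU : IsUpperSet U)
    {d : ℕ} (h : ∀ v, HasProjectiveDimensionLT (sqQuot K {G | insert v G ∈ U}) d)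
    {r : MvPolynomial σ K} (hr : r ∈ Ideal.span (Set.range (X : σ → MvPolynomial σ K)))
    (Y : ModuleCat.{0} (MvPolynomial σ K)) (x : Abelian.Ext (sqQuot K U) Y d) : r • x = 0 := by
  induction hr using Submodule.span_induction with
  | zero => exact zero_smul _ x
  | add a b _ _ ha hb => rw [add_smul, ha, hb, add_zero]
  | smul a b _ hb => rw [smul_assoc, hb, smul_zero]
  | mem r hr =>
    obtain ⟨v, rfl⟩ := hr
    have hX : X v ∈ sqIdeal K {G | v ∈ G ∨ G ∈ U} := by
      rw [← sqIdeal_sup_span_X]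
      exact Ideal.mem_sup_right (Ideal.mem_span_singleton_self _)
    refine smul_ext_eq_zero_of_shortExact (sqIdeal_colonComplex_shortExact (K := K) hU v) (h v)
      (fun z => ?_) Y x
    obtain ⟨z, rfl⟩ := Submodule.Quotient.mk_surjective _ z
    exact (Submodule.Quotient.mk_eq_zero _).2 (Ideal.mul_mem_right _ _ hX)

lemma hasProjectiveDimensionLT_sqQuot_colon {n e : ℕ} (he : e ≤ n)
    (ih : ∀ U : Set (Finset (Fin n)), IsUpperSet U → ∅ ∉ U →
      (∀ i, i + e < n → SqExtVanishes K U i) → HasProjectiveDimensionLT (sqQuot K U) (e + 1))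
    {U : Set (Finset (Fin (n + 1)))} (hU : IsUpperSet U)
    (h : ∀ i, i + e < n + 1 → SqExtVanishes K U i) (v : Fin (n + 1)) :
    HasProjectiveDimensionLT (sqQuot K {G | insert v G ∈ U}) (e + 1) := by
  by_cases h0 : ∅ ∈ {G : Finset (Fin (n + 1)) | insert v G ∈ U}
  · exact hasProjectiveDimensionLT_sqQuot_of_mem h0 _
  · let V : Set (Finset (Fin n)) := {H | insert v (H.map v.succAboveEmb) ∈ U}
    have hV : IsUpperSet V := fun H H' hH hHU =>
      hU (Finset.insert_subset_insert v (Finset.map_subset_map.2 hH)) hHU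
    have hV0 : ∅ ∉ V := by simpa [V] using h0
    have hUV : {G : Finset (Fin (n + 1)) | insert v G ∈ U} = {G | initPart v G ∈ V} := by
      ext G
      have : insert v ((initPart v G).map v.succAboveEmb) = insert v G := by
        ext i
        obtain rfl | ⟨j, rfl⟩ := Fin.eq_self_or_eq_succAbove v i <;> simp
      simp [V, this]
    have hE : ∀ i < n + 1 - e, SqExtVanishes K {G | initPart v G ∈ V} i := fun i hi =>
      hUV ▸ (h i (by omega)).colon hU v
    rw [forall_lt_sqExtVanishes_initPart_iff K v hV hV0] at hE
    rw [hUV]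
    exact hasProjectiveDimensionLT_sqQuot_initPart K v hV
      (ih V hV hV0 fun i hi => forall_lt_sqExtVanishes_iff hV0 |>.2 le_rfl i (by omega))

lemma hasProjectiveDimensionLT_sqQuot_of_sqExtVanishes (n : ℕ) :
    ∀ (e : ℕ) (U : Set (Finset (Fin n))), IsUpperSet U → ∅ ∉ U →
      (∀ i, i + e < n → SqExtVanishes K U i) →
      HasProjectiveDimensionLT (sqQuot K U) (e + 1) := by
  induction n with
  | zero =>
    intro e U hU _ _
    exact hasProjectiveDimensionLT_mono
      (hasProjectiveDimensionLT_sqQuot Finset.univ U hU fun G => by rw [Finset.inter_univ])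
      (by simp)
  | succ n ih =>
    intro e U hU _ h
    have htop : HasProjectiveDimensionLT (sqQuot K U) (n + 1 + 1) := by
      simpa using hasProjectiveDimensionLT_sqQuot (K := K) Finset.univ U hU (by simp)
    obtain he | he := Nat.lt_or_ge n e
    · exact hasProjectiveDimensionLT_mono htop (by omega)
    · have hcolon := hasProjectiveDimensionLT_sqQuot_colon he (ih e) hU h
      refine Nat.decreasingInduction' (P := fun j => HasProjectiveDimensionLT (sqQuot K U) (j + 1))
        (fun j hj hej hLT => ?_) (by omega : e ≤ n + 1) htop
      have hn := isExtDepth_residue_self K (Fin (n + 1))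
      rw [Fintype.card_fin] at hn
      exact hasProjectiveDimensionLT_of_smul_ext_eq_zero (fun r hr y => smul_residue_eq_zero hr y)
        hn j (MvPolynomial (Fin (n + 1)) K ⧸ sqIdeal K U) (n - j) (by omega) hLT
        (fun r hr Y x => smul_ext_sqQuot_eq_zero hU
          (fun v => hasProjectiveDimensionLT_mono (hcolon v) (by omega)) hr Y x)
        (h (n - j) (by omega))

lemma hasProjectiveDimensionLT_sqQuot_iff {n : ℕ} {U : Set (Finset (Fin n))} (hU : IsUpperSet U)
    (h0 : ∅ ∉ U) {e : ℕ} :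
    HasProjectiveDimensionLT (sqQuot K U) (e + 1) ↔ n ≤ e + polyDepth K (sqIdeal K U) := by
  have hiff : (∀ i, i + e < n → SqExtVanishes K U i) ↔ n ≤ e + polyDepth K (sqIdeal K U) := by
    rw [← Nat.sub_le_iff_le_add', ← forall_lt_sqExtVanishes_iff h0]
    exact forall_congr' fun i => by rw [Nat.lt_sub_iff_add_lt]
  rw [← hiff]
  refine ⟨fun h i hi => ?_, hasProjectiveDimensionLT_sqQuot_of_sqExtVanishes n e U hU h0⟩
  have hn := isExtDepth_residue_self K (Fin n)
  rw [Fintype.card_fin] at hn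
  exact extVanishes_of_hasProjectiveDimensionLT hn.1 e _ h i hi

lemma projDim_sqIdeal {n : ℕ} {U : Set (Finset (Fin n))} (hU : IsUpperSet U) (h0 : ∅ ∉ U) :
    projDim (MvPolynomial (Fin n) K) (MvPolynomial (Fin n) K ⧸ sqIdeal K U) =
      n - polyDepth K (sqIdeal K U) := by
  have : {d | HasProjectiveDimensionLT (sqQuot K U) (d + 1)} =
      Set.Ici (n - polyDepth K (sqIdeal K U)) := by
    ext d
    rw [Set.mem_ofPred_eq, hasProjectiveDimensionLT_sqQuot_iff hU h0, Set.mem_Ici]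
    omega
  rw [projDim_eq, this, csInf_Ici]

lemma polyDepth_sqIdeal_le {n : ℕ} {U : Set (Finset (Fin n))} (hU : IsUpperSet U) (h0 : ∅ ∉ U) :
    polyDepth K (sqIdeal K U) ≤ n := by
  by_contra! hlt
  have hE : ∀ i < n + 1, SqExtVanishes K U i := (forall_lt_sqExtVanishes_iff h0).2 hlt
  have : Module.Projective (MvPolynomial (Fin n) K) (MvPolynomial (Fin n) K ⧸ sqIdeal K U) :=
    (IsProjective.iff_projective _).2 (projective_iff_hasProjectiveDimensionLT_one.2
      ((hasProjectiveDimensionLT_sqQuot_iff (e := 0) hU h0).2 (by omega)))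
  have hn := isExtDepth_residue_self K (Fin n)
  rw [Fintype.card_fin] at hn
  have h1 := mem_smul_top_of_ext_injective (fun r hr y => smul_residue_eq_zero hr y) hn.2
    (0 : (MvPolynomial (Fin n) K ⧸ sqIdeal K U) →ₗ[MvPolynomial (Fin n) K] (Fin 0 → _))
    (fun y _ => hE n (by omega) y) (c := Submodule.Quotient.mk 1) (Submodule.zero_mem _)
  have h2 : Submodule.factor (sqIdeal_le_span_range_X (K := K) h0)
      (Submodule.Quotient.mk 1) = 0 := by
    have hle : Ideal.span (Set.range X) • ⊤ ≤
        LinearMap.ker (Submodule.factor (sqIdeal_le_span_range_X (K := K) h0)) :=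
      Submodule.smul_le.2 fun r hr z _ => by
        rw [LinearMap.mem_ker, map_smul]
        exact smul_residue_eq_zero hr _
    exact hle h1
  exact span_range_X_ne_top ((Ideal.eq_top_iff_one _).2 ((Submodule.Quotient.mk_eq_zero _).1 h2))

end SquarefreeProjDim

section Main

variable {K : Type} [Field K] {n : ℕ}

lemma projDim_sqfreePower (I : Ideal (MvPolynomial (Fin n) K)) {k : ℕ} (h0 : ∅ ∉ powSet K I k) :
    projDim (MvPolynomial (Fin n) K) (MvPolynomial (Fin n) K ⧸ sqfreePower K I k) =
      n - polyDepth K (sqfreePower K I k) := by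
  rw [sqfreePower_eq_sqIdeal]
  exact projDim_sqIdeal (isUpperSet_powSet I k) h0

lemma polyDepth_sqfreePower_le (I : Ideal (MvPolynomial (Fin n) K)) {k : ℕ}
    (h0 : ∅ ∉ powSet K I k) : polyDepth K (sqfreePower K I k) ≤ n := by
  rw [sqfreePower_eq_sqIdeal]
  exact polyDepth_sqIdeal_le (isUpperSet_powSet I k) h0

lemma projDim_sqfreePower_adjoin (p : Fin (n + 1)) (I : Ideal (MvPolynomial (Fin n) K)) {k : ℕ}
    (hk : 2 ≤ k) (hkI : k ≤ monGrade K I) :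
    projDim (MvPolynomial (Fin (n + 1)) K) (MvPolynomial (Fin (n + 1)) K ⧸
        sqfreePower K (Ideal.map (rename p.succAbove) I ⊔ Ideal.span {X p}) k) =
      max (projDim (MvPolynomial (Fin n) K)
          (MvPolynomial (Fin n) K ⧸ sqfreePower K I k) + 1)
        (projDim (MvPolynomial (Fin n) K)
          (MvPolynomial (Fin n) K ⧸ sqfreePower K I (k - 1))) := by
  have hI := (powSet_nonempty_of_le_monGrade (by omega) hkI).2
  have h1 := empty_notMem_powSet hI (by omega : k ≠ 0)
  have h2 := empty_notMem_powSet hI (by omega : k - 1 ≠ 0)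
  have h3 : ∅ ∉ powSet K (Ideal.map (rename p.succAbove) I ⊔ Ideal.span {X p}) k := by
    obtain ⟨k, rfl⟩ : ∃ l, k = l + 1 := ⟨k - 1, by omega⟩
    rw [powSet_adjoin]
    simpa [mixSet] using h1
  rw [projDim_sqfreePower _ h1, projDim_sqfreePower _ h2, projDim_sqfreePower _ h3,
    polyDepth_sqfreePower_adjoin p I hk hkI]
  have := polyDepth_sqfreePower_le I h1
  have := polyDepth_sqfreePower_le I h2
  omega

end Main

/-- For a squarefree monomial ideal `I ⊆ S' = K[x₁,…,xₙ]` all of whose squarefree powers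
are componentwise linear, and `J = (I, x) ⊆ S = S'[x]`, for every `2 ≤ k ≤ ν(I)`:
`pd(S/J^[k]) = max{ pd(S'/I^[k]) + 1, pd(S'/I^[k−1]) }`, and equivalently
`depth(S/J^[k]) = min{ depth(S'/I^[k]), depth(S'/I^[k−1]) + 1 }`. -/
theorem pd_depth_of_adjoin_variable (K : Type) [Field K] (n : ℕ)
    (I : Ideal (MvPolynomial (Fin n) K)) (hI : IsSqfreeMonomialIdeal K I)
    (hcl : ∀ k : ℕ, 1 ≤ k → k ≤ monGrade K I → ComponentwiseLinear K (sqfreePower K I k))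
    (J : Ideal (MvPolynomial (Fin (n + 1)) K))
    (hJ : J = Ideal.map (MvPolynomial.rename (Fin.castSucc : Fin n → Fin (n + 1))) I ⊔
              Ideal.span {MvPolynomial.X (Fin.last n)}) :
    ∀ k : ℕ, 2 ≤ k → k ≤ monGrade K I →
      projDim (MvPolynomial (Fin (n + 1)) K)
          (MvPolynomial (Fin (n + 1)) K ⧸ sqfreePower K J k) =
        max (projDim (MvPolynomial (Fin n) K)
              (MvPolynomial (Fin n) K ⧸ sqfreePower K I k) + 1)
          (projDim (MvPolynomial (Fin n) K)
            (MvPolynomial (Fin n) K ⧸ sqfreePower K I (k - 1))) ∧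
      polyDepth K (sqfreePower K J k) =
        min (polyDepth K (sqfreePower K I k))
          (polyDepth K (sqfreePower K I (k - 1)) + 1) := by
  intro k hk hkI
  have hJ' : J = Ideal.map (rename (Fin.last n).succAbove) I ⊔ Ideal.span {X (Fin.last n)} := by
    rw [hJ, Fin.succAbove_last]
  rw [hJ']
  exact ⟨projDim_sqfreePower_adjoin (Fin.last n) I hk hkI,
    polyDepth_sqfreePower_adjoin (Fin.last n) I hk hkI⟩
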